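/- Let E be a G-invariant Lebesgue-measurable subset of ℝ^d and let u be κ-harmonic in ℝ^{d+1}₊. If u is non-tangentially bounded at (x,0) for every x ∈ E, then there exists a subset E₀ ⊆ E with |E \ E₀| = 0 (Lebesgue measure) such that for every a > 0 and every x ∈ E₀, u(t,y) converges to a finite limit as (t,y) ∈ Γ_a(x) tends to (x,0). -/

import Mathlib

/-!
The factor `w(x) = ∏ |⟨α,x⟩|^κ(α)` (product over the positive roots) removes the first-order part
of the Dunkl Laplacian: for `κ`-harmonic `u` and regular `x`,
`Δ(w u) = 2 w ∑ κ(α) (u - u ∘ σ_α) / ⟨α,x⟩² + u Δw` (`lapE_dweight_mul`).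
Since `E` is `G`-invariant, `u` and all `u ∘ σ_α` are non-tangentially bounded at the points of `E`,
and almost every point is regular. Hence `E` is, up to a null set, covered by countably many
bounded sets `S` such that, on the sawtooth region formed by the cones of a fixed aperture and
height over the closure of `S`, both `v = w u` and `Δv` are bounded. As `w` is continuous and
positive near regular points, it suffices to find non-tangential limits of such `v`.

That is a local Fatou theorem of Calderón type for the ordinary Laplacian
(`ae_tendsto_of_bounded_saw`). Let `|v|, |Δv| ≤ M` on the sawtooth region over a compact set `F`.
For small `s > 0`, the maximum principle on the lower half of the region compares `v(x, y + s)` with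
the Poisson integral of the slice `v(·, s)` extended by zero. Their difference is at most
`Φ = C P[1_{B ∖ F}] + (4M/h) y + M y (h - y)`, where `P` denotes the Poisson integral and `B` is a
large ball: the first term dominates on the lateral boundary, the second on the top, and the last one
has Laplacian `-2M` (`abs_shift_sub_kint_le`). The slices are uniformly bounded, so they have a weak
limit `ψ` in `L²` as `s → 0`, and `|v - P[ψ]| ≤ Φ`. By the classical Fatou theorem for
Poisson integrals (`ae_tendsto_kint_pker`), at almost every point of `F` the function `P[ψ]` has a
non-tangential limit, while `P[1_{B ∖ F}]`, and with it `Φ`, tends to `0` in every cone. The latter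
also forces each cone to lie in the region near its vertex, because `P[1_{B ∖ F}]` is bounded
below off the region. Hence `v` has a non-tangential limit there.
-/

open MeasureTheory Filter Metric
open scoped RealInnerProductSpace Topology

noncomputable section

/-- Euclidean space `ℝ^d`. -/
abbrev Ed (d : ℕ) : Type := EuclideanSpace ℝ (Fin d)

/-- The reflection `σ_α(x) = x - ⟨α,x⟩α` (for roots normalized by `⟨α,α⟩ = 2`). -/
def reflAt {d : ℕ} (α x : Ed d) : Ed d := x - ⟪α, x⟫ • α

/-- The reflection group `G` generated by the reflections `σ_α`, `α ∈ R`, realized as the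
submonoid of self-maps of `ℝ^d` generated by the reflections (each reflection is an
involution, so this is in fact a group of transformations). -/
def dunklGroup {d : ℕ} (R : Finset (Ed d)) : Submonoid (Function.End (Ed d)) :=
  Submonoid.closure {f : Function.End (Ed d) | ∃ α ∈ R, f = reflAt α}

/-- A (normalized) root system `R` with positive subsystem `Rp` and
`G`-invariant nonnegative multiplicity function `κ`. -/
structure IsRootSystem {d : ℕ} (R Rp : Finset (Ed d)) (κ : Ed d → ℝ) : Prop where
  nonzero : ∀ α ∈ R, α ≠ (0 : Ed d)
  norm_two : ∀ α ∈ R, ⟪α, α⟫ = (2 : ℝ)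
  refl_mem : ∀ α ∈ R, ∀ β ∈ R, reflAt α β ∈ R
  pos_sub : Rp ⊆ R
  pos_split : ∀ α ∈ R, (α ∈ Rp ∧ ¬(-α ∈ Rp)) ∨ (¬(α ∈ Rp) ∧ -α ∈ Rp)
  kappa_nonneg : ∀ α ∈ R, 0 ≤ κ α
  kappa_inv : ∀ σ ∈ dunklGroup R, ∀ α ∈ R, κ (σ α) = κ α

/-- `x ∈ ℝ^d` is regular if `⟨α,x⟩ ≠ 0` for all roots `α ∈ R`. -/
def isRegular {d : ℕ} (R : Finset (Ed d)) (x : Ed d) : Prop :=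
  ∀ α ∈ R, ⟪α, x⟫ ≠ (0 : ℝ)

/-- Second directional derivative of `u` at `p` in direction `v`. -/
def pd2 {d : ℕ} (u : Ed d × ℝ → ℝ) (p v : Ed d × ℝ) : ℝ :=
  fderiv ℝ (fun q => fderiv ℝ u q v) p v

/-- The Euclidean Laplacian on `ℝ^{d+1} = ℝ^d × ℝ`. -/
def lapE {d : ℕ} (u : Ed d × ℝ → ℝ) (p : Ed d × ℝ) : ℝ :=
  (∑ i : Fin d, pd2 u p (EuclideanSpace.single i 1, 0)) + pd2 u p (0, 1)

/-- The Dunkl Laplacian `Δ_κ` on `ℝ^{d+1}` (the Dunkl operators act in the `x`-variables). -/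
def dunklLap {d : ℕ} (Rp : Finset (Ed d)) (κ : Ed d → ℝ) (u : Ed d × ℝ → ℝ)
    (p : Ed d × ℝ) : ℝ :=
  lapE u p + 2 * ∑ α ∈ Rp, κ α *
    (fderiv ℝ u p (α, 0) / ⟪α, p.1⟫ - (u p - u (reflAt α p.1, p.2)) / ⟪α, p.1⟫ ^ 2)

/-- The open upper half-space `ℝ^{d+1}₊`. -/
def upperHS (d : ℕ) : Set (Ed d × ℝ) := {p | 0 < p.2}

/-- `u` is `κ`-harmonic on `Ω`: `u` is `C²` on `Ω` and `Δ_κ u = 0` at every point of `Ω`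
whose `x`-coordinate is regular. -/
def KHarmonicOn {d : ℕ} (R Rp : Finset (Ed d)) (κ : Ed d → ℝ) (u : Ed d × ℝ → ℝ)
    (Ω : Set (Ed d × ℝ)) : Prop :=
  ContDiffOn ℝ 2 u Ω ∧ ∀ p ∈ Ω, isRegular R p.1 → dunklLap Rp κ u p = 0

/-- The cone `Γ_a(x)` of aperture `a` with vertex `(x,0)`. -/
def cone {d : ℕ} (a : ℝ) (x : Ed d) : Set (Ed d × ℝ) :=
  {p | 0 < p.2 ∧ dist p.1 x < a * p.2}

/-- The truncated cone `Γ_a^h(x)`. -/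
def coneT {d : ℕ} (a h : ℝ) (x : Ed d) : Set (Ed d × ℝ) :=
  {p | 0 < p.2 ∧ p.2 < h ∧ dist p.1 x < a * p.2}

/-- `u` has a finite non-tangential limit at `(x,0)`. -/
def HasNTLimit {d : ℕ} (u : Ed d × ℝ → ℝ) (x : Ed d) : Prop :=
  ∀ a > (0 : ℝ), ∃ L : ℝ, Tendsto u (𝓝[cone a x] (x, (0 : ℝ))) (𝓝 L)

/-- `u` is non-tangentially bounded at `(x,0)`. -/
def NTBounded {d : ℕ} (u : Ed d × ℝ → ℝ) (x : Ed d) : Prop :=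
  ∃ a > (0 : ℝ), ∃ h > (0 : ℝ), ∃ M : ℝ, ∀ p ∈ coneT a h x, |u p| ≤ M

/-- A subset of `ℝ^d` is `G`-invariant. -/
def GInvSet {d : ℕ} (R : Finset (Ed d)) (E : Set (Ed d)) : Prop :=
  ∀ σ ∈ dunklGroup R, σ '' E = E

/-! ### Second derivatives and the Laplacian -/

lemma isOpen_upperHS (d : ℕ) : IsOpen (upperHS d) := isOpen_lt continuous_const continuous_snd

lemma pd2_eq_deriv_deriv {d : ℕ} {f : Ed d × ℝ → ℝ} {p : Ed d × ℝ} (hf : ContDiffAt ℝ 2 f p)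
    (v : Ed d × ℝ) : pd2 f p v = deriv (deriv (fun τ : ℝ => f (p + τ • v))) 0 := by
  have hl : ∀ τ : ℝ, HasDerivAt (fun τ : ℝ => p + τ • v) v τ := fun τ => by
    simpa using ((hasDerivAt_id τ).smul_const v).const_add p
  have hc : Tendsto (fun τ : ℝ => p + τ • v) (𝓝 0) (𝓝 p) := by
    simpa using (hl 0).continuousAt.tendsto
  have hev : ∀ᶠ q in 𝓝 p, DifferentiableAt ℝ f q := by
    filter_upwards [hf.eventually (by simp)] with q hq using hq.differentiableAt (by simp)
  have h1 : deriv (fun τ : ℝ => f (p + τ • v)) =ᶠ[𝓝 0] fun τ => fderiv ℝ f (p + τ • v) v := by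
    filter_upwards [hc.eventually hev] with τ hτ
    exact (hτ.hasFDerivAt.comp_hasDerivAt τ (hl τ)).deriv
  rw [h1.deriv_eq]
  have h2 : DifferentiableAt ℝ (fun q => fderiv ℝ f q v) p :=
    ((hf.fderiv_right (m := 1) (by norm_num)).differentiableAt (by simp)).clm_apply
      (differentiableAt_const v)
  have h3 : HasFDerivAt (fun q => fderiv ℝ f q v) (fderiv ℝ (fun q => fderiv ℝ f q v) p)
      (p + (0:ℝ) • v) := by simpa using h2.hasFDerivAt
  exact (h3.comp_hasDerivAt (0:ℝ) (hl 0)).deriv.symm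

lemma pd2_nonpos_of_isLocalMax {d : ℕ} {f : Ed d × ℝ → ℝ} {p : Ed d × ℝ}
    (hf : ContDiffAt ℝ 2 f p) (hm : IsLocalMax f p) (v : Ed d × ℝ) : pd2 f p v ≤ 0 := by
  rw [pd2_eq_deriv_deriv hf]
  by_contra! hpos
  set g : ℝ → ℝ := fun τ : ℝ => f (p + τ • v) with hg
  have hl : ContinuousAt (fun τ : ℝ => p + τ • v) 0 := by fun_prop
  have hl' : Tendsto (fun τ : ℝ => p + τ • v) (𝓝 0) (𝓝 p) := by simpa using hl.tendsto
  have hgm : IsLocalMax g 0 := by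
    have := hl'.eventually hm
    simpa [IsLocalMax, IsMaxFilter, hg] using this
  have hgc : ContinuousAt g 0 := by
    have h : ContinuousAt f (p + (0:ℝ) • v) := by simpa using hf.continuousAt
    exact ContinuousAt.comp (f := fun τ : ℝ => p + τ • v) h hl
  have hgmin := isLocalMin_of_deriv_deriv_pos hpos hgm.deriv_eq_zero hgc
  have hconst : g =ᶠ[𝓝 0] fun _ => g 0 := by
    filter_upwards [hgm, hgmin] with τ h1 h2 using le_antisymm h1 h2
  have : deriv (deriv g) 0 = 0 := by
    rw [hconst.deriv.deriv_eq]; simp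
  linarith

lemma lapE_nonpos_of_isLocalMax {d : ℕ} {f : Ed d × ℝ → ℝ} {p : Ed d × ℝ}
    (hf : ContDiffAt ℝ 2 f p) (hm : IsLocalMax f p) : lapE f p ≤ 0 :=
  add_nonpos (Finset.sum_nonpos fun _ _ => pd2_nonpos_of_isLocalMax hf hm _)
    (pd2_nonpos_of_isLocalMax hf hm _)

lemma pd2_add {d : ℕ} {f g : Ed d × ℝ → ℝ} {p : Ed d × ℝ} (hf : ContDiffAt ℝ 2 f p)
    (hg : ContDiffAt ℝ 2 g p) (v : Ed d × ℝ) :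
    pd2 (fun q => f q + g q) p v = pd2 f p v + pd2 g p v := by
  unfold pd2
  have hev : (fun q => fderiv ℝ (fun q => f q + g q) q v)
      =ᶠ[𝓝 p] fun q => fderiv ℝ f q v + fderiv ℝ g q v := by
    filter_upwards [hf.eventually (by simp), hg.eventually (by simp)] with q h1 h2
    rw [fderiv_fun_add (h1.differentiableAt (by simp)) (h2.differentiableAt (by simp))]; rfl
  have h2 : ∀ {f : Ed d × ℝ → ℝ}, ContDiffAt ℝ 2 f p →
      DifferentiableAt ℝ (fun q => fderiv ℝ f q v) p := fun hf =>
    ((hf.fderiv_right (m := 1) (by norm_num)).differentiableAt (by simp)).clm_apply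
      (differentiableAt_const v)
  rw [hev.fderiv_eq, fderiv_fun_add (h2 hf) (h2 hg)]; rfl

lemma pd2_mul {d : ℕ} {f g : Ed d × ℝ → ℝ} {p : Ed d × ℝ} (hf : ContDiffAt ℝ 2 f p)
    (hg : ContDiffAt ℝ 2 g p) (v : Ed d × ℝ) :
    pd2 (fun q => f q * g q) p v =
      f p * pd2 g p v + 2 * (fderiv ℝ f p v * fderiv ℝ g p v) + g p * pd2 f p v := by
  unfold pd2
  have hev : (fun q => fderiv ℝ (fun q => f q * g q) q v)
      =ᶠ[𝓝 p] fun q => f q * fderiv ℝ g q v + g q * fderiv ℝ f q v := by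
    filter_upwards [hf.eventually (by simp), hg.eventually (by simp)] with q h1 h2
    rw [fderiv_fun_mul (h1.differentiableAt (by simp)) (h2.differentiableAt (by simp))]; rfl
  have h2 : ∀ {f : Ed d × ℝ → ℝ}, ContDiffAt ℝ 2 f p →
      DifferentiableAt ℝ (fun q => fderiv ℝ f q v) p := fun hf =>
    ((hf.fderiv_right (m := 1) (by norm_num)).differentiableAt (by simp)).clm_apply
      (differentiableAt_const v)
  have df := hf.differentiableAt (by simp : (2 : WithTop ℕ∞) ≠ 0)
  have dg := hg.differentiableAt (by simp : (2 : WithTop ℕ∞) ≠ 0)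
  rw [hev.fderiv_eq, fderiv_fun_add (df.fun_mul (h2 hg)) (dg.fun_mul (h2 hf)),
    fderiv_fun_mul df (h2 hg), fderiv_fun_mul dg (h2 hf)]
  simp only [add_apply, smul_apply, smul_eq_mul]
  ring

lemma lapE_add {d : ℕ} {f g : Ed d × ℝ → ℝ} {p : Ed d × ℝ} (hf : ContDiffAt ℝ 2 f p)
    (hg : ContDiffAt ℝ 2 g p) : lapE (fun q => f q + g q) p = lapE f p + lapE g p := by
  simp only [lapE, pd2_add hf hg, Finset.sum_add_distrib]; ring

lemma lapE_const_mul {d : ℕ} {f : Ed d × ℝ → ℝ} {p : Ed d × ℝ} (hf : ContDiffAt ℝ 2 f p)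
    (c : ℝ) : lapE (fun q => c * f q) p = c * lapE f p := by
  have h : ∀ v, pd2 (fun _ : Ed d × ℝ => c) p v = 0 := fun v => by simp [pd2]
  simp only [lapE, pd2_mul contDiffAt_const hf, h]
  simp [Finset.mul_sum, mul_add]

/-! ### The Poisson kernel -/

/-- The (unnormalized) Poisson kernel `y (|x|² + y²)^{-(d+1)/2}` of the upper half-space. -/
def pker (d : ℕ) (p : Ed d × ℝ) : ℝ := p.2 * (‖p.1‖ ^ 2 + p.2 ^ 2) ^ (-((d : ℝ) + 1) / 2)

lemma pker_base_pos {d : ℕ} {p : Ed d × ℝ} (hp : p ∈ upperHS d) : 0 < ‖p.1‖ ^ 2 + p.2 ^ 2 := by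
  have : 0 < p.2 := hp
  positivity

lemma pker_nonneg {d : ℕ} {p : Ed d × ℝ} (hp : p ∈ upperHS d) : 0 ≤ pker d p :=
  mul_nonneg (le_of_lt hp) (Real.rpow_nonneg (pker_base_pos hp).le _)

lemma contDiffOn_pker (d : ℕ) (n : WithTop ℕ∞) : ContDiffOn ℝ n (pker d) (upperHS d) := by
  unfold pker
  refine contDiff_snd.contDiffOn.mul (ContDiffOn.rpow_const_of_ne ?_ ?_)
  · exact ((contDiff_fst.norm_sq ℝ).add (contDiff_snd.pow 2)).contDiffOn
  · intro p hp; exact (pker_base_pos hp).ne'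

/-- Second derivative at `0` of the restriction of the Poisson kernel to a line. -/
lemma deriv_deriv_aux (y η A B C s : ℝ) (hA : 0 < A) :
    deriv (deriv (fun τ : ℝ => (y + τ * η) * (A + 2 * B * τ + C * τ ^ 2) ^ s)) 0 =
      A ^ (s - 2) * (4 * η * s * A * B + y * s * (s - 1) * 4 * B ^ 2 + 2 * y * s * C * A) := by
  have hq : ∀ τ, HasDerivAt (fun τ : ℝ => A + 2 * B * τ + C * τ ^ 2) (2 * B + 2 * C * τ) τ := by
    intro τ
    have := (((hasDerivAt_id' τ).const_mul (2 * B)).const_add A).fun_add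
      (((hasDerivAt_id' τ).fun_pow 2).const_mul C)
    exact this.congr_deriv (by norm_num; ring)
  have hl : ∀ τ, HasDerivAt (fun τ : ℝ => y + τ * η) η τ := by
    intro τ
    simpa using ((hasDerivAt_id τ).mul_const η).const_add y
  have hev : ∀ᶠ τ : ℝ in 𝓝 0, 0 < A + 2 * B * τ + C * τ ^ 2 := by
    have : ContinuousAt (fun τ : ℝ => A + 2 * B * τ + C * τ ^ 2) 0 := by fun_prop
    exact this.eventually_const_lt (by simpa using hA)
  have hr : ∀ r τ, 0 < A + 2 * B * τ + C * τ ^ 2 →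
      HasDerivAt (fun τ : ℝ => (A + 2 * B * τ + C * τ ^ 2) ^ r)
        ((2 * B + 2 * C * τ) * r * (A + 2 * B * τ + C * τ ^ 2) ^ (r - 1)) τ :=
    fun r τ h => (hq τ).rpow_const (Or.inl h.ne')
  have h1 : deriv (fun τ : ℝ => (y + τ * η) * (A + 2 * B * τ + C * τ ^ 2) ^ s) =ᶠ[𝓝 0]
      fun τ => η * (A + 2 * B * τ + C * τ ^ 2) ^ s + (y + τ * η) *
        ((2 * B + 2 * C * τ) * s * (A + 2 * B * τ + C * τ ^ 2) ^ (s - 1)) := by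
    filter_upwards [hev] with τ hτ
    exact ((hl τ).mul (hr s τ hτ)).deriv
  rw [h1.deriv_eq]
  have h0 : 0 < A + 2 * B * 0 + C * 0 ^ 2 := by simpa using hA
  have hm : HasDerivAt (fun τ : ℝ => 2 * B + 2 * C * τ) (2 * C) 0 := by
    simpa using ((hasDerivAt_id (0:ℝ)).const_mul (2 * C)).const_add (2 * B)
  have := ((hr s 0 h0).const_mul η).fun_add
    ((hl 0).fun_mul ((hm.mul_const s).fun_mul (hr (s - 1) 0 h0)))
  rw [HasDerivAt.deriv this]
  have e1 : A ^ (s - 1) = A ^ (s - 2) * A := by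
    rw [← Real.rpow_add_one hA.ne']; ring_nf
  have e2 : s - 1 - 1 = s - 2 := by ring
  simp only [mul_zero, add_zero, zero_mul, ne_eq, OfNat.ofNat_ne_zero, not_false_eq_true, zero_pow,
    e1, e2]
  ring

lemma pd2_pker {d : ℕ} {p : Ed d × ℝ} (hp : p ∈ upperHS d) (v : Ed d × ℝ) :
    pd2 (pker d) p v = (‖p.1‖ ^ 2 + p.2 ^ 2) ^ (-((d : ℝ) + 1) / 2 - 2) *
      (4 * v.2 * (-((d : ℝ) + 1) / 2) * (‖p.1‖ ^ 2 + p.2 ^ 2) * (⟪p.1, v.1⟫ + p.2 * v.2)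
        + p.2 * (-((d : ℝ) + 1) / 2) * (-((d : ℝ) + 1) / 2 - 1) * 4 * (⟪p.1, v.1⟫ + p.2 * v.2) ^ 2
        + 2 * p.2 * (-((d : ℝ) + 1) / 2) * (‖v.1‖ ^ 2 + v.2 ^ 2) * (‖p.1‖ ^ 2 + p.2 ^ 2)) := by
  rw [pd2_eq_deriv_deriv ((contDiffOn_pker d 2).contDiffAt ((isOpen_upperHS d).mem_nhds hp)),
    ← deriv_deriv_aux _ _ _ _ _ _ (pker_base_pos hp)]
  congr 2
  ext τ
  simp only [pker, Prod.snd_add, Prod.smul_snd, smul_eq_mul, Prod.fst_add, Prod.smul_fst,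
    norm_add_sq_real, inner_smul_right, norm_smul, mul_pow, Real.norm_eq_abs, sq_abs]
  congr 2
  ring

lemma lapE_pker {d : ℕ} {p : Ed d × ℝ} (hp : p ∈ upperHS d) : lapE (pker d) p = 0 := by
  simp only [lapE, pd2_pker hp]
  rw [← Finset.mul_sum, ← mul_add]
  have h1 : ∑ i : Fin d, (p.1 i) ^ 2 = ‖p.1‖ ^ 2 := by
    rw [EuclideanSpace.norm_sq_eq]; simp
  refine mul_eq_zero_of_right _ ?_
  simp only [mul_zero, zero_mul, add_zero, zero_add, EuclideanSpace.inner_single_right,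
    PiLp.norm_single, norm_one, one_pow, inner_zero_right, mul_one, norm_zero, one_mul]
  simp only [Finset.sum_add_distrib, ← Finset.mul_sum, RCLike.conj_to_real, h1]
  simp
  ring

/-! ### Poisson integrals of boundary densities -/

/-- The horizontal convolution `∫ φ(t) k(x - t, y) dt` of a density `φ` on the boundary with a
kernel `k` on the upper half-space. -/
def kint {d : ℕ} {G : Type} [NormedAddCommGroup G] [NormedSpace ℝ G] (k : Ed d × ℝ → G)
    (φ : Ed d → ℝ) (p : Ed d × ℝ) : G := ∫ t, φ t • k (p - (t, 0))

lemma sub_mem_upperHS {d : ℕ} {p : Ed d × ℝ} (hp : p ∈ upperHS d) (t : Ed d) :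
    p - (t, (0:ℝ)) ∈ upperHS d := by
  simpa [upperHS] using hp

lemma continuous_shift {d : ℕ} {G : Type} [NormedAddCommGroup G] {k : Ed d × ℝ → G}
    (hk : ContinuousOn k (upperHS d))
    {p : Ed d × ℝ} (hp : p ∈ upperHS d) : Continuous fun t : Ed d => k (p - (t, (0:ℝ))) :=
  hk.comp_continuous (by fun_prop) (sub_mem_upperHS hp)

section kint
variable {d : ℕ} {G : Type} [NormedAddCommGroup G] [NormedSpace ℝ G]

lemma integrable_kint {k : Ed d × ℝ → G} (hk : ContinuousOn k (upperHS d)) {φ : Ed d → ℝ}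
    (hφ : Integrable φ) {ρ : ℝ} (hρ : ∀ t, ρ < ‖t‖ → φ t = 0) {p : Ed d × ℝ}
    (hp : p ∈ upperHS d) : Integrable fun t => φ t • k (p - (t, (0:ℝ))) := by
  have hc := continuous_shift hk hp
  obtain ⟨C, hC⟩ := (isCompact_closedBall (0 : Ed d) ρ).exists_bound_of_continuousOn
    hc.continuousOn
  refine (hφ.norm.mul_const C).mono' (hφ.aestronglyMeasurable.smul hc.aestronglyMeasurable)
    (Eventually.of_forall fun t => ?_)
  rw [norm_smul]
  by_cases ht : ρ < ‖t‖
  · simp [hρ t ht]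
  · gcongr
    exact hC t (by simpa using ht)

lemma hasFDerivAt_kint {k : Ed d × ℝ → G} (hk : ContDiffOn ℝ 1 k (upperHS d)) {φ : Ed d → ℝ}
    (hφ : Integrable φ) {ρ : ℝ} (hρ : ∀ t, ρ < ‖t‖ → φ t = 0) {p : Ed d × ℝ}
    (hp : p ∈ upperHS d) : HasFDerivAt (kint k φ) (kint (fderiv ℝ k) φ p) p := by
  have hU := isOpen_upperHS d
  have hk' : ContinuousOn (fderiv ℝ k) (upperHS d) :=
    hk.continuousOn_fderiv_of_isOpen hU le_rfl
  obtain ⟨ε, hε, hball⟩ := Metric.nhds_basis_closedBall.mem_iff.1 (hU.mem_nhds hp)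
  have hcont : ContinuousOn (fun q : (Ed d × ℝ) × Ed d => fderiv ℝ k (q.1 - (q.2, (0:ℝ))))
      (closedBall p ε ×ˢ closedBall 0 ρ) := by
    refine hk'.comp (by fun_prop) ?_
    intro q hq
    exact sub_mem_upperHS (hball hq.1) _
  obtain ⟨C, hC⟩ := ((isCompact_closedBall p ε).prod
    (isCompact_closedBall (0 : Ed d) ρ)).exists_bound_of_continuousOn hcont
  refine hasFDerivAt_integral_of_dominated_of_fderiv_le (bound := fun t => ‖φ t‖ * C)
    (F' := fun q t => φ t • fderiv ℝ k (q - (t, (0:ℝ))))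
    (closedBall_mem_nhds p hε) ?_ (integrable_kint hk.continuousOn hφ hρ hp)
    (integrable_kint hk' hφ hρ hp).aestronglyMeasurable ?_ (hφ.norm.mul_const C) ?_
  · filter_upwards [hU.mem_nhds hp] with q hq
    exact (integrable_kint hk.continuousOn hφ hρ hq).aestronglyMeasurable
  · refine Eventually.of_forall fun t q hq => ?_
    rw [norm_smul]
    by_cases ht : ρ < ‖t‖
    · simp [hρ t ht]
    · gcongr
      exact hC (q, t) ⟨hq, by simpa using ht⟩
  · refine Eventually.of_forall fun t q hq => ?_
    have h1 : HasFDerivAt k (fderiv ℝ k (q - (t, (0:ℝ)))) (q - (t, (0:ℝ))) :=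
      ((hk.contDiffAt (hU.mem_nhds (sub_mem_upperHS (hball hq) t))).differentiableAt
        (by simp)).hasFDerivAt
    exact ((hasFDerivAt_comp_sub (f := k) (t, (0:ℝ))).2 h1).const_smul (φ t)

/-- Smoothness of convolutions on the upper half-space, by induction over all target spaces since
the derivative of `kint k φ` is `kint` of the derivative of `k`. -/
lemma contDiffOn_kint {φ : Ed d → ℝ}
    (hφ : Integrable φ) {ρ : ℝ} (hρ : ∀ t, ρ < ‖t‖ → φ t = 0) (n : ℕ) :
    ∀ {G : Type} [NormedAddCommGroup G] [NormedSpace ℝ G] {k : Ed d × ℝ → G},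
      ContDiffOn ℝ (n + 1) k (upperHS d) → ContDiffOn ℝ n (kint k φ) (upperHS d) := by
  have hU := isOpen_upperHS d
  induction n with
  | zero =>
    intro G _ _ k hk
    simp only [Nat.cast_zero, zero_add] at hk
    rw [Nat.cast_zero, contDiffOn_zero]
    intro p hp
    exact (hasFDerivAt_kint hk hφ hρ hp).continuousAt.continuousWithinAt
  | succ n ih =>
    intro G _ _ k hk
    have h1 : ContDiffOn ℝ 1 k (upperHS d) := hk.of_le (by simp)
    push_cast at hk ⊢
    rw [contDiffOn_succ_iff_fderiv_of_isOpen hU]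
    refine ⟨fun p hp => (hasFDerivAt_kint h1 hφ hρ hp).differentiableAt.differentiableWithinAt,
      by simp, ?_⟩
    refine (ih (hk.fderiv_of_isOpen hU le_rfl)).congr fun p hp => ?_
    exact (hasFDerivAt_kint h1 hφ hρ hp).fderiv

lemma fderiv_kint_apply [CompleteSpace G] {k : Ed d × ℝ → G} (hk : ContDiffOn ℝ 1 k (upperHS d))
    {φ : Ed d → ℝ}
    (hφ : Integrable φ) {ρ : ℝ} (hρ : ∀ t, ρ < ‖t‖ → φ t = 0) {p : Ed d × ℝ}
    (hp : p ∈ upperHS d) (v : Ed d × ℝ) :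
    fderiv ℝ (kint k φ) p v = kint (fun q => fderiv ℝ k q v) φ p := by
  rw [(hasFDerivAt_kint hk hφ hρ hp).fderiv, kint, ContinuousLinearMap.integral_apply]
  · rfl
  · exact integrable_kint (hk.continuousOn_fderiv_of_isOpen (isOpen_upperHS d) le_rfl) hφ hρ hp

lemma lapE_kint_pker {φ : Ed d → ℝ}
    (hφ : Integrable φ) {ρ : ℝ} (hρ : ∀ t, ρ < ‖t‖ → φ t = 0) {p : Ed d × ℝ}
    (hp : p ∈ upperHS d) : lapE (kint (pker d) φ) p = 0 := by
  have hU := isOpen_upperHS d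
  have hkv : ∀ v, ContDiffOn ℝ 1 (fun q => fderiv ℝ (pker d) q v) (upperHS d) := fun v =>
    ((contDiffOn_pker d 2).fderiv_of_isOpen hU (by norm_num)).clm_apply contDiffOn_const
  have hkvv : ∀ v, ContinuousOn (fun q => pd2 (pker d) q v) (upperHS d) := fun v =>
    ((hkv v).continuousOn_fderiv_of_isOpen hU le_rfl).clm_apply continuousOn_const
  have key : ∀ v, pd2 (kint (pker d) φ) p v = kint (fun q => pd2 (pker d) q v) φ p := by
    intro v
    have : (fun q => fderiv ℝ (kint (pker d) φ) q v) =ᶠ[𝓝 p]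
        kint (fun q => fderiv ℝ (pker d) q v) φ := by
      filter_upwards [hU.mem_nhds hp] with q hq
      exact fderiv_kint_apply (contDiffOn_pker d 1) hφ hρ hq v
    rw [pd2, this.fderiv_eq, fderiv_kint_apply (hkv v) hφ hρ hp]
    rfl
  simp only [lapE, key]
  simp only [kint]
  rw [← integral_finsetSum _ fun i _ => integrable_kint (hkvv _) hφ hρ hp,
    ← integral_add (integrable_finsetSum _ fun i _ => integrable_kint (hkvv _) hφ hρ hp)
      (integrable_kint (hkvv _) hφ hρ hp)]
  refine integral_eq_zero_of_ae (Eventually.of_forall fun t => ?_)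
  have := lapE_pker (sub_mem_upperHS hp t)
  simp only [lapE] at this
  simp only [← Finset.smul_sum, ← smul_add, this]
  simp

end kint

/-! ### Maximum principle -/

/-- Maximum principle for strictly subharmonic functions on a bounded open set. -/
lemma le_zero_of_lapE_pos {d : ℕ} {Ω : Set (Ed d × ℝ)} (hΩ : IsOpen Ω)
    (hb : Bornology.IsBounded Ω) {f : Ed d × ℝ → ℝ} (hf : ContDiffOn ℝ 2 f Ω)
    (hlap : ∀ p ∈ Ω, 0 < lapE f p)
    (hbd : ∀ p ∈ closure Ω, p ∉ Ω → ∀ ε > 0, ∀ᶠ q in 𝓝[Ω] p, f q ≤ ε) :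
    ∀ p ∈ Ω, f p ≤ 0 := by
  by_contra! hcon
  obtain ⟨p0, hp0, hpos⟩ := hcon
  -- the set where `f` is at least `f p0` is compact, since `f` is small near the boundary
  have hK : IsCompact {q | q ∈ Ω ∧ f p0 ≤ f q} := by
    refine Metric.isCompact_of_isClosed_isBounded ?_ (hb.subset fun q hq => hq.1)
    rw [← isSeqClosed_iff_isClosed]
    intro s q hs hq
    have hqc : q ∈ closure Ω :=
      mem_closure_of_tendsto hq (Eventually.of_forall fun n => (hs n).1)
    have hq' : Tendsto s atTop (𝓝[Ω] q) :=
      tendsto_nhdsWithin_iff.2 ⟨hq, Eventually.of_forall fun n => (hs n).1⟩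
    by_cases hqΩ : q ∈ Ω
    · exact ⟨hqΩ, ge_of_tendsto (((hf.continuousOn q hqΩ).tendsto).comp hq')
        (Eventually.of_forall fun n => (hs n).2)⟩
    · obtain ⟨n, hn⟩ := (hq'.eventually (hbd q hqc hqΩ (f p0 / 2) (by linarith))).exists
      have := (hs n).2
      linarith
  obtain ⟨q, hq, hmax⟩ := hK.exists_isMaxOn ⟨p0, hp0, le_rfl⟩
    (hf.continuousOn.mono fun q hq => hq.1)
  have hloc : IsLocalMax f q := by
    filter_upwards [hΩ.mem_nhds hq.1] with z hz
    by_cases h : f p0 ≤ f z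
    · exact hmax ⟨hz, h⟩
    · exact (not_le.1 h).le.trans hq.2
  exact absurd (lapE_nonpos_of_isLocalMax (hf.contDiffAt (hΩ.mem_nhds hq.1)) hloc)
    (not_le.2 (hlap q hq.1))

/-! ### Mass, bounds and boundary values of Poisson integrals -/

/-- The total mass of the unnormalized Poisson kernel at height one (hence at any height). -/
def pmass (d : ℕ) : ℝ := ∫ t : Ed d, pker d (t, 1)

lemma sq_rpow_aux (d : ℕ) {r : ℝ} (hr : 0 < r) :
    (r ^ 2) ^ (-((d : ℝ) + 1) / 2) = (r ^ (d + 1))⁻¹ := by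
  rw [← Real.rpow_natCast r 2, ← Real.rpow_mul hr.le, ← Real.rpow_natCast r (d + 1),
    ← Real.rpow_neg hr.le]
  congr 1
  push_cast; ring

lemma pker_le {d : ℕ} {p : Ed d × ℝ} (hp : 0 < p.2) {r : ℝ} (hr : 0 < r)
    (h : r ^ 2 ≤ ‖p.1‖ ^ 2 + p.2 ^ 2) : pker d p ≤ p.2 * (r ^ (d + 1))⁻¹ := by
  rw [← sq_rpow_aux d hr]
  refine mul_le_mul_of_nonneg_left ?_ hp.le
  exact Real.rpow_le_rpow_of_nonpos (by positivity) h (by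
    have : (0:ℝ) ≤ d := d.cast_nonneg
    linarith)

lemma le_pker {d : ℕ} {p : Ed d × ℝ} (hp : 0 < p.2) {r : ℝ} (hr : 0 < r)
    (h : ‖p.1‖ ^ 2 + p.2 ^ 2 ≤ r ^ 2) : p.2 * (r ^ (d + 1))⁻¹ ≤ pker d p := by
  rw [← sq_rpow_aux d hr]
  refine mul_le_mul_of_nonneg_left ?_ hp.le
  exact Real.rpow_le_rpow_of_nonpos (by positivity) h (by
    have : (0:ℝ) ≤ d := d.cast_nonneg
    linarith)

lemma pker_scale {d : ℕ} (x : Ed d) {y : ℝ} (hy : 0 < y) :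
    pker d (y⁻¹ • x, 1) = y ^ d * pker d (x, y) := by
  have h1 : ‖x‖ ^ 2 + y ^ 2 = y ^ 2 * (‖y⁻¹ • x‖ ^ 2 + 1 ^ 2) := by
    rw [norm_smul, norm_inv, Real.norm_of_nonneg hy.le]
    field_simp
  simp only [pker]
  rw [h1, Real.mul_rpow (by positivity) (by positivity), sq_rpow_aux d hy]
  field_simp
  ring

lemma integrable_pker_one (d : ℕ) : Integrable fun t : Ed d => pker d (t, 1) := by
  have := integrable_rpow_neg_one_add_norm_sq (E := Ed d) (μ := volume) (r := (d : ℝ) + 1)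
    (by simp)
  refine this.congr (Eventually.of_forall fun t => ?_)
  simp [pker, add_comm]

lemma pmass_pos (d : ℕ) : 0 < pmass d := by
  have h0 : ∀ t : Ed d, 0 < pker d (t, 1) := fun t => by
    simp only [pker]; positivity
  rw [pmass, integral_pos_iff_support_of_nonneg (fun t => (h0 t).le) (integrable_pker_one d)]
  have : Function.support (fun t : Ed d => pker d (t, 1)) = Set.univ := by
    ext t; simp [(h0 t).ne']
  rw [this]
  exact (Measure.measure_univ_pos.2 (NeZero.ne _))

/-- The Poisson integral in the variables adapted to the point `p`. -/
lemma kint_pker_eq {d : ℕ} (φ : Ed d → ℝ) {p : Ed d × ℝ} (hp : 0 < p.2) :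
    kint (pker d) φ p = ∫ s, φ (p.1 - p.2 • s) * pker d (s, 1) := by
  obtain ⟨x, y⟩ := p
  simp only at hp ⊢
  have h := Measure.integral_comp_inv_smul volume
    (fun s : Ed d => φ (x - y • s) * pker d (s, 1)) y
  have h2 := integral_sub_left_eq_self (fun t : Ed d => φ (x - t) * pker d (t, y)) volume x
  simp only [sub_sub_cancel] at h2
  rw [kint]
  simp only [Prod.mk_sub_mk, sub_zero, smul_eq_mul]
  rw [h2]
  have hyd : (0:ℝ) < y ^ d := by positivity
  simp only [pker_scale _ hp, smul_inv_smul₀ hp.ne', finrank_euclideanSpace, Fintype.card_fin,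
    abs_of_pos hyd, smul_eq_mul] at h
  have h3 : ∀ t : Ed d, φ (x - t) * (y ^ d * pker d (t, y)) =
      y ^ d * (φ (x - t) * pker d (t, y)) := fun t => by ring
  simp only [h3, integral_const_mul] at h
  exact mul_left_cancel₀ hyd.ne' h

lemma kint_pker_const {d : ℕ} (c : ℝ) {p : Ed d × ℝ} (hp : 0 < p.2) :
    kint (pker d) (fun _ => c) p = pmass d * c := by
  rw [kint_pker_eq _ hp, integral_const_mul, pmass, mul_comm]

lemma abs_kint_pker_le {d : ℕ} {φ : Ed d → ℝ} {M : ℝ} (hM : ∀ t, |φ t| ≤ M)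
    {p : Ed d × ℝ} (hp : 0 < p.2) : |kint (pker d) φ p| ≤ pmass d * M := by
  rw [kint_pker_eq _ hp, mul_comm, pmass, ← integral_const_mul]
  refine norm_integral_le_of_norm_le (f := fun s => φ (p.1 - p.2 • s) * pker d (s, 1))
    ((integrable_pker_one d).const_mul M)
    (Eventually.of_forall fun s => ?_)
  have h0 : 0 ≤ pker d (s, 1) := pker_nonneg (by simp [upperHS])
  rw [norm_mul, Real.norm_eq_abs, Real.norm_of_nonneg h0]
  exact mul_le_mul_of_nonneg_right (hM _) h0

/-- Unrestricted boundary convergence of Poisson integrals at points of continuity. -/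
lemma tendsto_kint_pker {d : ℕ} {φ : Ed d → ℝ} {M : ℝ} (hM : ∀ t, |φ t| ≤ M)
    (hφ : Measurable φ) {z : Ed d} (hz : ContinuousAt φ z) :
    Tendsto (kint (pker d) φ) (𝓝[upperHS d] (z, (0:ℝ))) (𝓝 (pmass d * φ z)) := by
  have key : Tendsto (fun p : Ed d × ℝ => ∫ s, φ (p.1 - p.2 • s) * pker d (s, 1))
      (𝓝[upperHS d] (z, (0:ℝ))) (𝓝 (∫ s, φ z * pker d (s, 1))) := by
    refine tendsto_integral_filter_of_dominated_convergence (fun s => M * pker d (s, 1))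
      ?_ ?_ ((integrable_pker_one d).const_mul M) ?_
    · refine Eventually.of_forall fun p => ?_
      refine AEStronglyMeasurable.mul ?_ (integrable_pker_one d).aestronglyMeasurable
      exact (hφ.comp (by fun_prop)).aestronglyMeasurable
    · refine Eventually.of_forall fun p => Eventually.of_forall fun s => ?_
      have h0 : 0 ≤ pker d (s, 1) := pker_nonneg (by simp [upperHS])
      rw [norm_mul, Real.norm_eq_abs, Real.norm_of_nonneg h0]
      exact mul_le_mul_of_nonneg_right (hM _) h0
    · refine Eventually.of_forall fun s => Tendsto.mul_const _ ?_
      refine hz.tendsto.comp (tendsto_nhdsWithin_of_tendsto_nhds ?_)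
      have : Continuous fun p : Ed d × ℝ => p.1 - p.2 • s := by fun_prop
      simpa using this.tendsto (z, 0)
  rw [integral_const_mul, mul_comm] at key
  refine key.congr' ?_
  filter_upwards [self_mem_nhdsWithin] with p hp
  rw [kint_pker_eq _ hp]

/-- A boundary set containing a ball of radius `a y` around `x` has Poisson integral bounded
below at `(x, y)`. -/
lemma exists_kint_pker_lower (d : ℕ) {a : ℝ} (ha : 0 < a) : ∃ c > 0, ∀ (D : Set (Ed d)),
    MeasurableSet D → ∀ p : Ed d × ℝ, 0 < p.2 → ball p.1 (a * p.2) ⊆ D →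
    c ≤ kint (pker d) (D.indicator fun _ => 1) p := by
  have hinteg : ∀ φ : Ed d → ℝ, Measurable φ → (∀ t, |φ t| ≤ 1) →
      Integrable fun s : Ed d => φ s * pker d (s, 1) := fun φ hφ hb => by
    exact (integrable_pker_one d).bdd_mul hφ.aestronglyMeasurable
      (Eventually.of_forall fun t => hb t)
  have hb : ∀ (D : Set (Ed d)) t, |D.indicator (fun _ => (1:ℝ)) t| ≤ 1 := by
    intro D t
    by_cases h : t ∈ D <;> simp [h]
  refine ⟨∫ s, (ball (0 : Ed d) a).indicator (fun _ => 1) s * pker d (s, 1), ?_, ?_⟩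
  · have h0 : ∀ t : Ed d, 0 < pker d (t, 1) := fun t => by
      simp only [pker]; positivity
    have hi : Integrable fun s : Ed d => (ball (0 : Ed d) a).indicator (fun _ => (1:ℝ)) s
        * pker d (s, 1) :=
      hinteg _ (measurable_const.indicator measurableSet_ball) (hb _)
    rw [gt_iff_lt, integral_pos_iff_support_of_nonneg _ hi]
    · have : Function.support (fun s : Ed d => (ball (0 : Ed d) a).indicator (fun _ => (1:ℝ)) s
        * pker d (s, 1)) = ball 0 a := by
        ext t; simp [(h0 t).ne']
      rw [this]
      exact measure_ball_pos _ _ ha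
    · intro s
      exact mul_nonneg (Set.indicator_nonneg (by simp) _) (h0 s).le
  · intro D hD p hp hsub
    rw [kint_pker_eq _ hp]
    refine integral_mono (hinteg _ (measurable_const.indicator measurableSet_ball) (hb _))
      (hinteg (fun s => D.indicator (fun _ => (1:ℝ)) (p.1 - p.2 • s))
        ((measurable_const.indicator hD).comp (by fun_prop)) (fun t => hb _ _)) ?_
    intro s
    refine mul_le_mul_of_nonneg_right ?_ (pker_nonneg (by simp [upperHS]))
    by_cases hs : s ∈ ball (0 : Ed d) a
    · have : p.1 - p.2 • s ∈ D := hsub (by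
        simp only [mem_ball, dist_eq_norm, sub_sub_cancel_left, norm_neg, norm_smul,
          Real.norm_of_nonneg hp.le]
        rw [mul_comm]
        have : ‖s‖ < a := by simpa using hs
        gcongr)
      simp [hs, this]
    · rw [Set.indicator_of_notMem hs]
      exact Set.indicator_nonneg (by simp) _

/-! ### Fatou's theorem for Poisson integrals -/

/-- In a cone with vertex `x0` the Poisson kernel is dominated by one of the dyadic box kernels
`2^{-k} (2^k y)^{-d} 1_{B(x0, 2^k y)}`. -/
lemma exists_pker_le_dyadic {d : ℕ} {A : ℝ} (hA : 0 < A) {x0 x : Ed d} {y : ℝ} (hy : 0 < y)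
    (hx : dist x x0 < A * y) (t : Ed d) : ∃ k : ℕ, t ∈ closedBall x0 (2 ^ k * y) ∧
      pker d (x - t, y) ≤ (2 * (1 + A)) ^ (d + 1) * ((2 ^ k)⁻¹ * ((2 ^ k * y) ^ d)⁻¹) := by
  have hex : ∃ k : ℕ, dist t x0 ≤ 2 ^ k * y := by
    obtain ⟨k, hk⟩ := pow_unbounded_of_one_lt (dist t x0 / y) (one_lt_two)
    exact ⟨k, by rw [div_lt_iff₀ hy] at hk; exact hk.le⟩
  classical
  refine ⟨Nat.find hex, Nat.find_spec hex, ?_⟩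
  set k := Nat.find hex with hk
  have hform : (2 * (1 + A)) ^ (d + 1) * (((2:ℝ) ^ k)⁻¹ * ((2 ^ k * y) ^ d)⁻¹)
      = y * ((2 ^ k * y / (2 * (1 + A))) ^ (d + 1))⁻¹ := by
    rw [div_pow, pow_succ (2 ^ k * y)]
    field_simp
  rw [hform]
  refine pker_le (p := (x - t, y)) hy (by positivity) ?_
  have hmain : 2 ^ k * y / (2 * (1 + A)) ≤ max ‖x - t‖ y := by
    rw [div_le_iff₀ (by positivity)]
    rcases Nat.eq_zero_or_pos k with h0 | h0
    · have := le_max_right ‖x - t‖ y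
      rw [h0]
      nlinarith
    · have h1 : ¬ dist t x0 ≤ 2 ^ (k - 1) * y := Nat.find_min hex (by omega)
      have h2 : (2:ℝ) ^ k = 2 * 2 ^ (k - 1) := by
        rw [← pow_succ']; congr 1; omega
      have h3 : dist t x0 ≤ ‖x - t‖ + A * y := by
        have := dist_triangle t x x0
        rw [dist_comm t x, dist_eq_norm x t] at this
        linarith
      have := le_max_right ‖x - t‖ y
      have := le_max_left ‖x - t‖ y
      rw [h2]
      nlinarith
  have h0 : 0 ≤ 2 ^ k * y / (2 * (1 + A)) := by positivity
  calc (2 ^ k * y / (2 * (1 + A))) ^ 2 ≤ (max ‖x - t‖ y) ^ 2 := by gcongr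
    _ ≤ ‖x - t‖ ^ 2 + y ^ 2 := by
      rcases max_cases ‖x - t‖ y with h | h <;> rw [h.1] <;> nlinarith [sq_nonneg ‖x - t‖, sq_nonneg y]

/-- Poisson integrals in a cone are dominated by a weighted sum of averages over dyadic balls. -/
lemma abs_integral_mul_pker_le {d : ℕ} {A : ℝ} (hA : 0 < A) {x0 : Ed d} {f : Ed d → ℝ}
    (hf : LocallyIntegrable f) {p : Ed d × ℝ} (hp : p ∈ cone A x0)
    (hsum : Summable fun k : ℕ => ((2:ℝ) ^ k)⁻¹ *
      (((2 ^ k * p.2) ^ d)⁻¹ * ∫ t in closedBall x0 (2 ^ k * p.2), ‖f t‖)) :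
    |∫ t, f t * pker d (p - (t, 0))| ≤ (2 * (1 + A)) ^ (d + 1) * ∑' k : ℕ, ((2:ℝ) ^ k)⁻¹ *
      (((2 ^ k * p.2) ^ d)⁻¹ * ∫ t in closedBall x0 (2 ^ k * p.2), ‖f t‖) := by
  have hy : 0 < p.2 := hp.1
  set C := (2 * (1 + A)) ^ (d + 1) with hC
  have hC0 : 0 ≤ C := by positivity
  set b : ℕ → ℝ := fun k => ((2:ℝ) ^ k)⁻¹ * ((2 ^ k * p.2) ^ d)⁻¹ with hb
  have hb0 : ∀ k, 0 ≤ b k := fun k => by simp only [hb]; positivity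
  set T : ℕ → ℝ := fun k => ((2:ℝ) ^ k)⁻¹ *
      (((2 ^ k * p.2) ^ d)⁻¹ * ∫ t in closedBall x0 (2 ^ k * p.2), ‖f t‖) with hT
  have hT0 : ∀ k, 0 ≤ T k := fun k => by
    simp only [hT]
    have : 0 ≤ ∫ t in closedBall x0 (2 ^ k * p.2), ‖f t‖ := integral_nonneg fun t => norm_nonneg _
    positivity
  refine (norm_integral_le_lintegral_norm fun t => f t * pker d (p - (t, 0))).trans
    (ENNReal.toReal_le_of_le_ofReal (mul_nonneg hC0 (tsum_nonneg hT0)) ?_)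
  rw [← tsum_mul_left, ENNReal.ofReal_tsum_of_nonneg (fun k => mul_nonneg hC0 (hT0 k))
    (hsum.mul_left C)]
  have hterm : ∀ k, ENNReal.ofReal (C * T k) =
      ∫⁻ t, (closedBall x0 (2 ^ k * p.2)).indicator
        (fun t => ENNReal.ofReal (C * b k * ‖f t‖)) t := by
    intro k
    have hi : IntegrableOn (fun t => C * b k * ‖f t‖) (closedBall x0 (2 ^ k * p.2)) :=
      ((hf.integrableOn_isCompact (isCompact_closedBall _ _)).norm).const_mul _
    rw [lintegral_indicator measurableSet_closedBall, ← ofReal_integral_eq_lintegral_ofReal hi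
      (Eventually.of_forall fun t => mul_nonneg (mul_nonneg hC0 (hb0 k)) (norm_nonneg _)),
      integral_const_mul]
    congr 1
    simp only [hT, hb]; ring
  simp_rw [hterm]
  rw [← lintegral_tsum]
  · refine lintegral_mono fun t => ?_
    obtain ⟨k, hk1, hk2⟩ := exists_pker_le_dyadic hA hy hp.2 t
    refine le_trans ?_ (ENNReal.le_tsum k)
    rw [Set.indicator_of_mem hk1]
    refine ENNReal.ofReal_le_ofReal ?_
    have h0 : 0 ≤ pker d (p - (t, 0)) := pker_nonneg (sub_mem_upperHS hy t)
    rw [norm_mul, Real.norm_of_nonneg h0, mul_comm]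
    refine mul_le_mul_of_nonneg_right ?_ (norm_nonneg _)
    have : p - (t, (0:ℝ)) = (p.1 - t, p.2) := by ext <;> simp
    rw [this]
    exact hk2
  · intro k
    refine AEMeasurable.indicator ?_ measurableSet_closedBall
    exact (hf.aestronglyMeasurable.norm.aemeasurable.const_mul _).ennreal_ofReal

/-- Fatou's theorem: Poisson integrals converge non-tangentially almost everywhere, namely
at the Lebesgue points of the density. -/
lemma ae_tendsto_kint_pker {d : ℕ} {φ : Ed d → ℝ} (hφ : Integrable φ) {ρ : ℝ}
    (hρ : ∀ t, ρ < ‖t‖ → φ t = 0) : ∀ᵐ x0 : Ed d, ∀ A > (0:ℝ),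
      Tendsto (kint (pker d) φ) (𝓝[cone A x0] (x0, (0:ℝ))) (𝓝 (pmass d * φ x0)) := by
  filter_upwards [IsUnifLocDoublingMeasure.ae_tendsto_average_norm_sub (volume : Measure (Ed d))
    hφ.locallyIntegrable 1] with x0 hx0 A hA
  set c := φ x0 with hc
  set f : Ed d → ℝ := fun t => φ t - c with hf
  have hfl : LocallyIntegrable f := hφ.locallyIntegrable.sub (locallyIntegrable_const c)
  set ω : ℝ := volume.real (ball (0 : Ed d) 1) with hω
  have hω0 : 0 < ω := by
    rw [hω, measureReal_def]
    exact ENNReal.toReal_pos (measure_ball_pos _ _ one_pos).ne' measure_ball_lt_top.ne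
  have hvol : ∀ r : ℝ, 0 ≤ r → volume.real (closedBall x0 r) = r ^ d * ω := fun r hr => by
    rw [Measure.addHaar_real_closedBall _ _ hr]; simp [hω]
  set m : ℝ → ℝ := fun r => (r ^ d)⁻¹ * ∫ t in closedBall x0 r, ‖f t‖ with hm
  have hm0 : ∀ r, 0 < r → 0 ≤ m r := fun r hr => by
    have : 0 ≤ ∫ t in closedBall x0 r, ‖f t‖ := integral_nonneg fun t => norm_nonneg _
    simp only [hm]; positivity
  have hmt : Tendsto m (𝓝[>] 0) (𝓝 0) := by
    have h1 := hx0 (l := 𝓝[>] (0:ℝ)) (fun _ => x0) id tendsto_id (by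
      filter_upwards [self_mem_nhdsWithin] with r hr
      have : (0:ℝ) < r := hr
      simp [this.le])
    have h2 := h1.const_mul ω
    rw [mul_zero] at h2
    refine h2.congr' ?_
    filter_upwards [self_mem_nhdsWithin] with r hr
    have hr' : (0:ℝ) < r := hr
    rw [setAverage_eq, id, hvol r hr'.le]
    simp only [hm, smul_eq_mul, hf]
    field_simp
  -- the averages are bounded at all scales, since `φ` is integrable
  obtain ⟨B, hB⟩ : ∃ B, ∀ r, 0 < r → m r ≤ B := by
    obtain ⟨δ, hδ, hδm⟩ := mem_nhdsGT_iff_exists_Ioo_subset.1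
      (hmt.eventually (gt_mem_nhds one_pos))
    have hδ : (0:ℝ) < δ := hδ
    refine ⟨max 1 ((δ ^ d)⁻¹ * (∫ t, ‖φ t‖) + |c| * ω), fun r hr => ?_⟩
    rcases lt_or_ge r δ with h | h
    · exact (le_of_lt (hδm ⟨hr, h⟩)).trans (le_max_left _ _)
    · refine le_trans ?_ (le_max_right _ _)
      have hinteg : ∫ t in closedBall x0 r, ‖f t‖ ≤ (∫ t, ‖φ t‖) + |c| * (r ^ d * ω) := by
        have h1 : ∫ t in closedBall x0 r, ‖f t‖ ≤ ∫ t in closedBall x0 r, (‖φ t‖ + |c|) := by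
          refine setIntegral_mono (hfl.integrableOn_isCompact (isCompact_closedBall _ _)).norm
            (hφ.norm.integrableOn.add (integrableOn_const measure_closedBall_lt_top.ne)) fun t => ?_
          exact norm_sub_le _ _
        have h2 : ∫ t in closedBall x0 r, (‖φ t‖ + |c|) =
            (∫ t in closedBall x0 r, ‖φ t‖) + |c| * (r ^ d * ω) := by
          rw [integral_add hφ.norm.integrableOn (integrableOn_const measure_closedBall_lt_top.ne),
            setIntegral_const, hvol r hr.le, smul_eq_mul, mul_comm |c|]
        have h3 : ∫ t in closedBall x0 r, ‖φ t‖ ≤ ∫ t, ‖φ t‖ :=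
          setIntegral_le_integral hφ.norm (Eventually.of_forall fun t => norm_nonneg _)
        linarith
      have hI : 0 ≤ ∫ t, ‖φ t‖ := integral_nonneg fun t => norm_nonneg _
      calc m r ≤ (r ^ d)⁻¹ * ((∫ t, ‖φ t‖) + |c| * (r ^ d * ω)) := by
            simp only [hm]; gcongr
        _ = (r ^ d)⁻¹ * (∫ t, ‖φ t‖) + |c| * ω := by field_simp
        _ ≤ _ := by gcongr
  have hgeo : Summable fun k : ℕ => ((2:ℝ) ^ k)⁻¹ * B := by
    simpa [inv_pow] using (summable_geometric_of_lt_one (r := (2:ℝ)⁻¹) (by norm_num)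
      (by norm_num)).mul_right B
  have hbd : ∀ y : ℝ, 0 < y → ∀ k : ℕ, ‖((2:ℝ) ^ k)⁻¹ * m (2 ^ k * y)‖ ≤ ((2:ℝ) ^ k)⁻¹ * B := by
    intro y hy k
    rw [Real.norm_of_nonneg (mul_nonneg (by positivity) (hm0 _ (by positivity)))]
    exact mul_le_mul_of_nonneg_left (hB _ (by positivity)) (by positivity)
  have hS : Tendsto (fun y : ℝ => ∑' k : ℕ, ((2:ℝ) ^ k)⁻¹ * m (2 ^ k * y)) (𝓝[>] 0) (𝓝 0) := by
    have := tendsto_tsum_of_dominated_convergence (𝓕 := 𝓝[>] (0:ℝ))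
      (f := fun y (k : ℕ) => ((2:ℝ) ^ k)⁻¹ * m (2 ^ k * y)) (g := fun _ => 0) hgeo ?_ ?_
    · simpa using this
    · intro k
      have h2 : Tendsto (fun y : ℝ => 2 ^ k * y) (𝓝[>] 0) (𝓝[>] 0) := by
        refine tendsto_nhdsWithin_iff.2 ⟨tendsto_nhdsWithin_of_tendsto_nhds ?_, ?_⟩
        · have : Continuous fun y : ℝ => 2 ^ k * y := by fun_prop
          simpa using this.tendsto 0
        · filter_upwards [self_mem_nhdsWithin] with y hy
          have : (0:ℝ) < y := hy
          simp only [Set.mem_Ioi]; positivity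
      simpa using (hmt.comp h2).const_mul (((2:ℝ) ^ k)⁻¹)
    · filter_upwards [self_mem_nhdsWithin] with y hy using hbd y hy
  have hsnd : Tendsto (fun p : Ed d × ℝ => p.2) (𝓝[cone A x0] (x0, (0:ℝ))) (𝓝[>] 0) := by
    refine tendsto_nhdsWithin_iff.2
      ⟨(continuous_snd.tendsto (x0, (0:ℝ))).mono_left nhdsWithin_le_nhds, ?_⟩
    filter_upwards [self_mem_nhdsWithin] with p hp using hp.1
  rw [tendsto_iff_norm_sub_tendsto_zero]
  have hlim := (hS.comp hsnd).const_mul ((2 * (1 + A)) ^ (d + 1))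
  rw [mul_zero] at hlim
  refine squeeze_zero' (Eventually.of_forall fun p => norm_nonneg _) ?_ hlim
  filter_upwards [self_mem_nhdsWithin] with p hp
  have hpU : p ∈ upperHS d := hp.1
  have hk := (contDiffOn_pker d 0).continuousOn
  have hcint : Integrable fun t => c • pker d (p - (t, (0:ℝ))) := by
    have h := kint_pker_const (d := d) 1 hp.1
    rw [mul_one, kint] at h
    simp only [one_smul] at h
    refine Integrable.smul c ?_
    refine .of_integral_ne_zero ?_
    rw [h]; exact (pmass_pos d).ne'
  have e : kint (pker d) φ p - pmass d * c = ∫ t, f t * pker d (p - (t, 0)) := by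
    rw [← kint_pker_const c hp.1, kint, kint, ← integral_sub (integrable_kint hk hφ hρ hpU) hcint]
    congr 1
    ext t
    simp only [hf, smul_eq_mul]; ring
  rw [e, Real.norm_eq_abs]
  exact abs_integral_mul_pker_le hA hfl hp
    (Summable.of_norm_bounded hgeo (hbd p.2 hp.1))

/-! ### Comparison on sawtooth regions -/

/-- The sawtooth region over `F`: for nonempty `F`, the union of the truncated cones
`Γ_a^h(x)` over `x ∈ F`. -/
def saw {d : ℕ} (F : Set (Ed d)) (a h : ℝ) : Set (Ed d × ℝ) :=
  {p | 0 < p.2 ∧ p.2 < h ∧ infDist p.1 F < a * p.2}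

/-- The normalized restriction of `v` to the part of the hyperplane of height `s` lying in a
sawtooth region over `F`, extended by zero. -/
def slice {d : ℕ} (F : Set (Ed d)) (a : ℝ) (v : Ed d × ℝ → ℝ) (s : ℝ) : Ed d → ℝ :=
  {t | infDist t F < a * s}.indicator fun t => (pmass d)⁻¹ * v (t, s)

/-- The superharmonic majorant used on a sawtooth region over `F`: a multiple of the Poisson
integral of the indicator of the complement of `F` (in a large ball), plus two functions of the
height which take care of the top of the region and of the inhomogeneity. -/
def major {d : ℕ} (F : Set (Ed d)) (R c M h : ℝ) (p : Ed d × ℝ) : ℝ :=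
  (2 * M / c) * kint (pker d) ((closedBall 0 R \ F).indicator fun _ => 1) p
    + (4 * M / h * p.2 + M * (p.2 * (h - p.2)))

lemma isOpen_saw {d : ℕ} (F : Set (Ed d)) (a h : ℝ) : IsOpen (saw F a h) := by
  have h1 : Continuous fun p : Ed d × ℝ => infDist p.1 F :=
    (continuous_infDist_pt F).comp continuous_fst
  exact (isOpen_lt continuous_const continuous_snd).inter
    ((isOpen_lt continuous_snd continuous_const).inter
      (isOpen_lt h1 (continuous_const.mul continuous_snd)))

lemma saw_subset_upperHS {d : ℕ} (F : Set (Ed d)) (a h : ℝ) : saw F a h ⊆ upperHS d :=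
  fun _ hp => hp.1

lemma closure_saw {d : ℕ} {F : Set (Ed d)} {a h : ℝ} {p : Ed d × ℝ}
    (hp : p ∈ closure (saw F a h)) : 0 ≤ p.2 ∧ p.2 ≤ h ∧ infDist p.1 F ≤ a * p.2 := by
  have h1 : Continuous fun p : Ed d × ℝ => infDist p.1 F :=
    (continuous_infDist_pt F).comp continuous_fst
  have hc : IsClosed {p : Ed d × ℝ | 0 ≤ p.2 ∧ p.2 ≤ h ∧ infDist p.1 F ≤ a * p.2} :=
    (isClosed_le continuous_const continuous_snd).inter
      ((isClosed_le continuous_snd continuous_const).inter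
      (isClosed_le h1 (continuous_const.mul continuous_snd)))
  have hsub : saw F a h ⊆ {p : Ed d × ℝ | 0 ≤ p.2 ∧ p.2 ≤ h ∧ infDist p.1 F ≤ a * p.2} :=
    fun q hq => ⟨hq.1.le, hq.2.1.le, hq.2.2.le⟩
  exact closure_minimal hsub hc hp

lemma lapE_shift {d : ℕ} (f : Ed d × ℝ → ℝ) (p w : Ed d × ℝ) :
    lapE (fun q => f (q + w)) p = lapE f (p + w) := by
  have h1 : ∀ g : Ed d × ℝ → ℝ, ∀ q, fderiv ℝ (fun q => g (q + w)) q = fderiv ℝ g (q + w) :=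
    fun g q => fderiv_comp_add_right w
  have h2 : ∀ z, pd2 (fun q => f (q + w)) p z = pd2 f (p + w) z := fun z => by
    simp only [pd2, h1]
    rw [h1 (fun q => fderiv ℝ f q z)]
  simp only [lapE, h2]

section slice
variable {d : ℕ} {F : Set (Ed d)} {a h M R s : ℝ} {v : Ed d × ℝ → ℝ}

lemma abs_slice_le (hs : 0 < s) (hsh : s < h) (hM : 0 ≤ M)
    (hvM : ∀ p ∈ saw F a h, |v p| ≤ M) (t : Ed d) : |slice F a v s t| ≤ (pmass d)⁻¹ * M := by
  have hm := pmass_pos d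
  by_cases ht : infDist t F < a * s
  · rw [slice, Set.indicator_of_mem (by exact ht), abs_mul, abs_of_pos (inv_pos.2 hm)]
    gcongr
    exact hvM _ ⟨hs, hsh, ht⟩
  · rw [slice, Set.indicator_of_notMem (by exact ht), abs_zero]
    positivity

lemma slice_eq_zero (ha : 0 < a) (hsh : s < h) (hR : ∀ t, infDist t F < a * h → ‖t‖ ≤ R)
    {t : Ed d} (ht : R < ‖t‖) : slice F a v s t = 0 := by
  rw [slice, Set.indicator_of_notMem]
  intro h1
  have h2 : infDist t F < a * s := h1
  exact absurd (hR t (h2.trans (by gcongr))) (not_le.2 ht)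

lemma continuousOn_slice (hs : 0 < s) (hsh : s < h) (hv : ContinuousOn v (saw F a h)) :
    ContinuousOn (fun t => (pmass d)⁻¹ * v (t, s)) {t | infDist t F < a * s} :=
  continuousOn_const.mul (hv.comp (by fun_prop) fun _ ht => ⟨hs, hsh, ht⟩)

lemma measurable_slice (hs : 0 < s) (hsh : s < h) (hv : ContinuousOn v (saw F a h)) :
    Measurable (slice F a v s) := by
  have hm : MeasurableSet {t : Ed d | infDist t F < a * s} :=
    (isOpen_lt (continuous_infDist_pt F) continuous_const).measurableSet
  classical
  rw [slice, ← Set.piecewise_eq_indicator]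
  exact (continuousOn_slice hs hsh hv).measurable_piecewise continuousOn_const hm

lemma integrable_of_bounded_support {φ : Ed d → ℝ} {C ρ : ℝ} (hφ : Measurable φ)
    (hC : ∀ t, |φ t| ≤ C) (hρ : ∀ t, ρ < ‖t‖ → φ t = 0) : Integrable φ := by
  have h1 : IntegrableOn φ (closedBall 0 ρ) :=
    Measure.integrableOn_of_bounded (M := C) measure_closedBall_lt_top.ne
      hφ.aestronglyMeasurable (Eventually.of_forall hC)
  refine (integrableOn_iff_integrable_of_support_subset fun t ht => ?_).1 h1
  rw [mem_closedBall_zero_iff]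
  by_contra h2
  exact ht (hρ t (not_le.1 h2))

end slice

section compare
variable {d : ℕ} {F : Set (Ed d)} {a h M R c s : ℝ} {v : Ed d × ℝ → ℝ}

lemma measurable_indF (hF : IsCompact F) :
    Measurable ((closedBall (0 : Ed d) R \ F).indicator fun _ => (1 : ℝ)) :=
  measurable_const.indicator (measurableSet_closedBall.diff hF.isClosed.measurableSet)

lemma indF_nonneg (t : Ed d) :
    0 ≤ (closedBall (0 : Ed d) R \ F).indicator (fun _ => (1 : ℝ)) t :=
  Set.indicator_nonneg (fun _ _ => zero_le_one) t

lemma indF_eq_zero {t : Ed d} (ht : R < ‖t‖) :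
    (closedBall (0 : Ed d) R \ F).indicator (fun _ => (1 : ℝ)) t = 0 :=
  Set.indicator_of_notMem (fun h => absurd (mem_closedBall_zero_iff.1 h.1) (not_le.2 ht)) _

lemma integrable_indF (hF : IsCompact F) :
    Integrable ((closedBall (0 : Ed d) R \ F).indicator fun _ => (1 : ℝ)) := by
  refine integrable_of_bounded_support (C := 1) (measurable_indF hF) (fun t => ?_)
    (fun t ht => indF_eq_zero ht)
  rw [abs_of_nonneg (indF_nonneg t)]
  exact Set.indicator_le_self' (fun _ _ => zero_le_one) t

lemma kint_indF_nonneg {p : Ed d × ℝ} (hp : 0 < p.2) :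
    0 ≤ kint (pker d) ((closedBall (0 : Ed d) R \ F).indicator fun _ => (1 : ℝ)) p :=
  integral_nonneg fun t => smul_nonneg (indF_nonneg t) (pker_nonneg (sub_mem_upperHS hp t))

lemma pd2_height {g g' : ℝ → ℝ} {g'' : ℝ} (h1 : ∀ y, HasDerivAt g (g' y) y)
    {p : Ed d × ℝ} (h2 : HasDerivAt g' g'' p.2) (z : Ed d × ℝ) :
    pd2 (fun q => g q.2) p z = z.2 * (z.2 * g'') := by
  have e1 : ∀ q : Ed d × ℝ, fderiv ℝ (fun q : Ed d × ℝ => g q.2) q z = z.2 * g' q.2 := by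
    intro q
    have := (h1 q.2).hasFDerivAt.comp q (hasFDerivAt_snd (𝕜 := ℝ) (E := Ed d) (F := ℝ) (p := q))
    have e : fderiv ℝ (fun q : Ed d × ℝ => g q.2) q = _ := this.fderiv
    rw [e]; simp
  have e2 := (h2.const_mul z.2).hasFDerivAt.comp p
    (hasFDerivAt_snd (𝕜 := ℝ) (E := Ed d) (F := ℝ) (p := p))
  simp only [pd2, e1]
  have e : fderiv ℝ (fun q : Ed d × ℝ => z.2 * g' q.2) p = _ := e2.fderiv
  rw [e]; simp

lemma lapE_height (A B h : ℝ) (p : Ed d × ℝ) :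
    lapE (fun q : Ed d × ℝ => A * q.2 + B * (q.2 * (h - q.2))) p = -2 * B := by
  have h1 : ∀ y : ℝ, HasDerivAt (fun y => A * y + B * (y * (h - y))) (A + B * (h - 2 * y)) y := by
    intro y
    have := ((hasDerivAt_id y).const_mul A).fun_add
      (((hasDerivAt_id y).fun_mul ((hasDerivAt_id y).const_sub h)).const_mul B)
    refine this.congr_deriv ?_
    simp only [id]; ring
  have h2 : HasDerivAt (fun y => A + B * (h - 2 * y)) (-2 * B) p.2 := by
    have := ((((hasDerivAt_id p.2).const_mul 2).const_sub h).const_mul B).const_add A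
    refine this.congr_deriv ?_
    ring
  have := fun z => pd2_height (d := d) h1 h2 z
  simp only [lapE, this]
  simp

lemma contDiffOn_major (hF : IsCompact F) :
    ContDiffOn ℝ 2 (major F R c M h) (upperHS d) := by
  have h1 := contDiffOn_kint (k := pker d) (integrable_indF (d := d) (R := R) hF)
    (fun t ht => indF_eq_zero ht) 2 (contDiffOn_pker d _)
  have h2 : ContDiff ℝ 2 (fun p : Ed d × ℝ => 4 * M / h * p.2 + M * (p.2 * (h - p.2))) := by
    fun_prop
  exact (contDiffOn_const.mul h1).add h2.contDiffOn

lemma lapE_major (hF : IsCompact F) {p : Ed d × ℝ} (hp : 0 < p.2) :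
    lapE (major F R c M h) p = -2 * M := by
  have hn : upperHS d ∈ 𝓝 p := (isOpen_upperHS d).mem_nhds hp
  have h1 := contDiffOn_kint (k := pker d) (integrable_indF (d := d) (R := R) hF)
    (fun t ht => indF_eq_zero ht) 2 (contDiffOn_pker d _)
  have h2 : ContDiff ℝ 2 (fun p : Ed d × ℝ => 4 * M / h * p.2 + M * (p.2 * (h - p.2))) := by
    fun_prop
  have h1' := h1.contDiffAt hn
  have h3 := lapE_add (contDiffAt_const.mul h1' :
    ContDiffAt ℝ 2 (fun q => 2 * M / c * kint (pker d) _ q) p) h2.contDiffAt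
  have h4 : lapE (major F R c M h) p = _ := h3
  rw [h4, lapE_const_mul h1', lapE_kint_pker (integrable_indF hF) (fun t ht => indF_eq_zero ht) hp,
    lapE_height]
  ring

lemma major_nonneg (hM : 0 ≤ M) (hh : 0 < h) (hc : 0 < c) {p : Ed d × ℝ} (hp : 0 < p.2)
    (hph : p.2 ≤ h) : 0 ≤ major F R c M h p := by
  have h1 := kint_indF_nonneg (F := F) (R := R) hp
  have h2 : 0 ≤ h - p.2 := by linarith
  unfold major
  positivity

/-- On the lateral boundary and on the top of the sawtooth region the majorant dominates `2M`. -/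
lemma le_major (hF : IsCompact F) (ha : 0 < a) (hM : 0 ≤ M) (hh : 0 < h)
    (hc : 0 < c)
    (hR : ∀ t, infDist t F < a * h → ‖t‖ ≤ R)
    (hcl : ∀ D : Set (Ed d), MeasurableSet D → ∀ p : Ed d × ℝ, 0 < p.2 →
      ball p.1 (a * p.2) ⊆ D → c ≤ kint (pker d) (D.indicator fun _ => 1) p)
    {p : Ed d × ℝ} (hp : 0 < p.2) (hph : p.2 ≤ h / 2) (hpa : infDist p.1 F ≤ a * p.2)
    (hp' : p ∉ saw F a (h / 2)) : 2 * M ≤ major F R c M h p := by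
  have h1 := kint_indF_nonneg (F := F) (R := R) hp
  have h2 : 0 ≤ h - p.2 := by linarith
  rcases hph.lt_or_eq with h3 | h3
  · have h4 : a * p.2 ≤ infDist p.1 F := by
      by_contra h4
      exact hp' ⟨hp, h3, not_le.1 h4⟩
    have h5 := hcl (closedBall 0 R \ F) (measurableSet_closedBall.diff hF.isClosed.measurableSet)
      p hp (by
        intro t ht
        rw [mem_ball] at ht
        constructor
        · rw [mem_closedBall_zero_iff]
          apply hR
          have := infDist_le_infDist_add_dist (s := F) (x := t) (y := p.1)
          nlinarith
        · intro htF
          have := infDist_le_dist_of_mem (x := p.1) htF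
          rw [dist_comm] at this
          linarith)
    have h6 : 2 * M ≤ 2 * M / c * kint (pker d) ((closedBall 0 R \ F).indicator fun _ => 1) p := by
      rw [div_mul_eq_mul_div, le_div_iff₀ hc]
      gcongr
    have : 0 ≤ 4 * M / h * p.2 + M * (p.2 * (h - p.2)) := by positivity
    unfold major; linarith
  · have h4 : 4 * M / h * p.2 = 2 * M := by rw [h3]; field_simp; ring
    have : 0 ≤ M * (p.2 * (h - p.2)) := by positivity
    have : 0 ≤ 2 * M / c * kint (pker d) ((closedBall 0 R \ F).indicator fun _ => 1) p := by
      positivity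
    unfold major; linarith

/-- Upper half of the comparison between `v`, shifted down by `s`, and the Poisson integral of
its slice at height `s`. -/
lemma shift_sub_kint_le (hF : IsCompact F) (ha : 0 < a) (hM : 0 < M)
    (hc : 0 < c)
    (hR : ∀ t, infDist t F < a * h → ‖t‖ ≤ R)
    (hcl : ∀ D : Set (Ed d), MeasurableSet D → ∀ p : Ed d × ℝ, 0 < p.2 →
      ball p.1 (a * p.2) ⊆ D → c ≤ kint (pker d) (D.indicator fun _ => 1) p)
    (hv : ContDiffOn ℝ 2 v (saw F a h)) (hvM : ∀ p ∈ saw F a h, |v p| ≤ M)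
    (hlM : ∀ p ∈ saw F a h, |lapE v p| ≤ M) (hs : 0 < s) (hsh : s < h / 2) :
    ∀ p ∈ saw F a (h / 2),
      v (p + (0, s)) - kint (pker d) (slice F a v s) p ≤ major F R c M h p := by
  have hh : 0 < h := by linarith
  have hsh' : s < h := by linarith
  have hm := pmass_pos d
  set φ := slice F a v s with hφ
  have hφM := abs_slice_le hs hsh' hM.le hvM
  have hφ0 : ∀ t, R < ‖t‖ → φ t = 0 := fun t ht => slice_eq_zero ha hsh' hR ht
  have hφm : Measurable φ := measurable_slice hs hsh' hv.continuousOn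
  have hφi := integrable_of_bounded_support hφm hφM hφ0
  have hshift : ∀ p : Ed d × ℝ, 0 ≤ p.2 → p.2 ≤ h / 2 → infDist p.1 F ≤ a * p.2 →
      p + (0, s) ∈ saw F a h := by
    intro p h1 h2 h3
    refine ⟨by simp; linarith, by simp; linarith, ?_⟩
    simp only [Prod.fst_add, Prod.snd_add, add_zero]
    nlinarith
  have hvs : ∀ p : Ed d × ℝ, 0 ≤ p.2 → p.2 ≤ h / 2 → infDist p.1 F ≤ a * p.2 →
      ContDiffAt ℝ 2 (fun q => v (q + (0, s))) p := by
    intro p h1 h2 h3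
    have h4 := hv.contDiffAt ((isOpen_saw F a h).mem_nhds (hshift p h1 h2 h3))
    exact h4.comp p (by fun_prop)
  have hk := contDiffOn_kint (k := pker d) hφi hφ0 2 (contDiffOn_pker d _)
  have hkp : ∀ p : Ed d × ℝ, 0 < p.2 → ContDiffAt ℝ 2 (kint (pker d) φ) p := fun p hp =>
    hk.contDiffAt ((isOpen_upperHS d).mem_nhds hp)
  have hmp : ∀ p : Ed d × ℝ, 0 < p.2 → ContDiffAt ℝ 2 (major F R c M h) p := fun p hp =>
    (contDiffOn_major hF).contDiffAt ((isOpen_upperHS d).mem_nhds hp)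
  set f : Ed d × ℝ → ℝ := fun q => v (q + (0, s)) + (-1) * (kint (pker d) φ q + major F R c M h q)
    with hf
  have hfc : ∀ p : Ed d × ℝ, 0 < p.2 → p.2 ≤ h / 2 → infDist p.1 F ≤ a * p.2 →
      ContDiffAt ℝ 2 f p := fun p h1 h2 h3 =>
    (hvs p h1.le h2 h3).add (contDiffAt_const.mul ((hkp p h1).add (hmp p h1)))
  have key := le_zero_of_lapE_pos (isOpen_saw F a (h / 2)) ?_
    (f := f) (fun p hp => (hfc p hp.1 hp.2.1.le hp.2.2.le).contDiffWithinAt) ?_ ?_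
  · intro p hp
    have := key p hp
    simp only [hf] at this
    linarith
  · refine (((isBounded_closedBall (x := (0 : Ed d)) (r := R)).prod
      (isBounded_Icc (0 : ℝ) h)).subset fun p hp => ⟨?_, hp.1.le, ?_⟩)
    · rw [mem_closedBall_zero_iff]
      apply hR
      refine hp.2.2.trans ?_
      have := hp.2.1
      gcongr
      linarith
    · have := hp.2.1
      linarith
  · intro p hp
    have h1 := hvs p hp.1.le hp.2.1.le hp.2.2.le
    have h2 := (hkp p hp.1).add (hmp p hp.1)
    have e : lapE f p = _ := lapE_add h1 (contDiffAt_const.mul h2 :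
      ContDiffAt ℝ 2 (fun q => (-1) * (kint (pker d) φ q + major F R c M h q)) p)
    rw [e, lapE_const_mul h2, lapE_add (hkp p hp.1) (hmp p hp.1), lapE_kint_pker hφi hφ0 hp.1,
      lapE_major hF hp.1, lapE_shift]
    have := (abs_le.1 (hlM _ (hshift p hp.1.le hp.2.1.le hp.2.2.le))).1
    linarith
  · intro p hpc hpn ε hε
    obtain ⟨h0, h1, h2⟩ := closure_saw hpc
    rcases h0.lt_or_eq with h3 | h3
    · have h4 : f p ≤ 0 := by
        have h5 := le_major hF ha hM.le hh hc hR hcl h3 h1 h2 hpn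
        have h6 := (abs_le.1 (hvM _ (hshift p h0 h1 h2))).2
        have h7 := (abs_le.1 (abs_kint_pker_le hφM h3)).1
        have h8 : pmass d * ((pmass d)⁻¹ * M) = M := by field_simp
        rw [h8] at h7
        simp only [hf]
        linarith
      have h5 := (hfc p h3 h1 h2).continuousAt
      exact (h5.eventually (ge_mem_nhds (h4.trans_lt hε))).filter_mono inf_le_left
    · obtain ⟨z, y⟩ := p
      simp only at h0 h1 h2 h3
      subst h3
      have hz : infDist z F < a * s := by nlinarith
      have hcz : ContinuousAt φ z := by
        have hn : {t : Ed d | infDist t F < a * s} ∈ 𝓝 z :=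
          (isOpen_lt (continuous_infDist_pt F) continuous_const).mem_nhds hz
        refine ((continuousOn_slice hs hsh' hv.continuousOn).continuousAt hn).congr ?_
        filter_upwards [hn] with t ht
        rw [hφ, slice, Set.indicator_of_mem (by exact ht)]
      have hφz : pmass d * φ z = v (z, s) := by
        rw [hφ, slice, Set.indicator_of_mem (by exact hz)]
        field_simp
      have t1 := tendsto_kint_pker hφM hφm hcz
      rw [hφz] at t1
      have t2 : Tendsto (fun q : Ed d × ℝ => v (q + (0, s))) (𝓝[upperHS d] (z, 0))
          (𝓝 (v (z, s))) := by
        have := (hvs (z, 0) le_rfl h1 h2).continuousAt.tendsto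
        simp only [Prod.mk_add_mk, add_zero, zero_add] at this
        exact this.mono_left inf_le_left
      have t3 := t2.sub t1
      rw [sub_self] at t3
      have t4 := (t3.mono_left (nhdsWithin_mono _ (saw_subset_upperHS F a (h / 2)))).eventually
        (ge_mem_nhds hε)
      filter_upwards [t4, self_mem_nhdsWithin] with q hq hq'
      have := major_nonneg (F := F) (R := R) hM.le hh hc hq'.1 (by linarith [hq'.2.1])
      simp only [hf]
      linarith

lemma abs_shift_sub_kint_le (hF : IsCompact F) (ha : 0 < a) (hM : 0 < M)
    (hc : 0 < c)
    (hR : ∀ t, infDist t F < a * h → ‖t‖ ≤ R)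
    (hcl : ∀ D : Set (Ed d), MeasurableSet D → ∀ p : Ed d × ℝ, 0 < p.2 →
      ball p.1 (a * p.2) ⊆ D → c ≤ kint (pker d) (D.indicator fun _ => 1) p)
    (hv : ContDiffOn ℝ 2 v (saw F a h)) (hvM : ∀ p ∈ saw F a h, |v p| ≤ M)
    (hlM : ∀ p ∈ saw F a h, |lapE v p| ≤ M) (hs : 0 < s) (hsh : s < h / 2)
    {p : Ed d × ℝ} (hp : p ∈ saw F a (h / 2)) :
      |v (p + (0, s)) - kint (pker d) (slice F a v s) p| ≤ major F R c M h p := by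
  have h1 := shift_sub_kint_le hF ha hM hc hR hcl hv hvM hlM hs hsh p hp
  have h2 := shift_sub_kint_le (v := fun q => (-1) * v q) hF ha hM hc hR hcl
    (contDiffOn_const.mul hv) (by simpa using hvM) (fun q hq => by
      rw [lapE_const_mul (hv.contDiffAt ((isOpen_saw F a h).mem_nhds hq))]
      simpa using hlM q hq) hs hsh p hp
  have e : kint (pker d) (slice F a (fun q => (-1) * v q) s) p
      = - kint (pker d) (slice F a v s) p := by
    rw [kint, kint, ← integral_neg]
    congr 1
    ext t
    by_cases ht : t ∈ {t | infDist t F < a * s}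
    · simp [slice, Set.indicator_of_mem ht]
    · simp [slice, Set.indicator_of_notMem ht]
  rw [e] at h2
  rw [abs_le]
  constructor <;> linarith

end compare

/-! ### The local Fatou theorem -/

/-- Weak compactness of uniformly bounded sequences of functions on a finite measure space,
with convergence along the (fixed) hyperfilter on `ℕ`. -/
lemma exists_weak_limit {α : Type*} [MeasurableSpace α] (μ : Measure α) [IsFiniteMeasure μ]
    (φ : ℕ → α → ℝ) (hφ : ∀ n, Measurable (φ n)) {C : ℝ} (hC : ∀ n t, |φ n t| ≤ C) :
    ∃ ψ : α → ℝ, Integrable ψ μ ∧ ∀ g : α → ℝ, MemLp g 2 μ →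
      Tendsto (fun n => ∫ t, φ n t * g t ∂μ) (hyperfilter ℕ) (𝓝 (∫ t, ψ t * g t ∂μ)) := by
  have hm : ∀ n, MemLp (φ n) 2 μ := fun n =>
    MemLp.of_bound (hφ n).aestronglyMeasurable C (Eventually.of_forall (hC n))
  set Φ : ℕ → Lp ℝ 2 μ := fun n => (hm n).toLp with hΦ
  obtain ⟨B, hB⟩ : ∃ B : ℝ, ∀ n, ‖Φ n‖ ≤ B := by
    refine ⟨_, fun n => Lp.norm_le_of_ae_bound (C := max C 0) (le_max_right _ _) ?_⟩
    filter_upwards [(hm n).coeFn_toLp] with t ht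
    rw [hΦ, ht]
    exact (hC n t).trans (le_max_left _ _)
  let T : ℕ → WeakDual ℝ (Lp ℝ 2 μ) := fun n =>
    StrongDual.toWeakDual (InnerProductSpace.toDual ℝ (Lp ℝ 2 μ) (Φ n))
  have hT : ∀ n, T n ∈ WeakDual.toStrongDual ⁻¹' closedBall (0 : StrongDual ℝ (Lp ℝ 2 μ)) B := by
    intro n
    simp only [Set.mem_preimage, mem_closedBall_zero_iff, T]
    exact ((InnerProductSpace.toDual ℝ (Lp ℝ 2 μ)).norm_map (Φ n)).le.trans (hB n)
  obtain ⟨Λ, -, hΛ⟩ := (WeakDual.isCompact_closedBall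
    (0 : StrongDual ℝ (Lp ℝ 2 μ)) B).ultrafilter_le_nhds ((hyperfilter ℕ).map T) (by
      rw [le_principal_iff, Ultrafilter.coe_map, mem_map]
      exact mem_of_superset univ_mem fun n _ => hT n)
  set ψ := (InnerProductSpace.toDual ℝ (Lp ℝ 2 μ)).symm (WeakDual.toStrongDual Λ) with hψ
  refine ⟨ψ, (Lp.memLp ψ).integrable (by norm_num), fun g hg => ?_⟩
  have h1 : Tendsto (fun n => T n hg.toLp) (hyperfilter ℕ) (𝓝 (Λ hg.toLp)) :=
    ((WeakDual.eval_continuous hg.toLp).tendsto Λ).comp hΛ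
  have h2 : ∀ n, T n hg.toLp = ∫ t, φ n t * g t ∂μ := by
    intro n
    have : T n hg.toLp = ⟪Φ n, hg.toLp⟫ := rfl
    rw [this, L2.inner_def]
    refine integral_congr_ae ?_
    filter_upwards [(hm n).coeFn_toLp, hg.coeFn_toLp] with t h3 h4
    rw [hΦ, h3, h4]
    simp [mul_comm]
  have h3 : Λ hg.toLp = ∫ t, ψ t * g t ∂μ := by
    have : Λ hg.toLp = ⟪ψ, hg.toLp⟫ := by
      rw [hψ, InnerProductSpace.toDual_symm_apply]
      rfl
    rw [this, L2.inner_def]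
    refine integral_congr_ae ?_
    filter_upwards [hg.coeFn_toLp] with t h4
    rw [h4]
    simp [mul_comm]
  rw [h3] at h1
  simpa only [h2] using h1

lemma tendsto_major {d : ℕ} {F : Set (Ed d)} {R c M h A : ℝ} {x : Ed d} (hx : x ∈ F)
    (h1 : Tendsto (kint (pker d) ((closedBall 0 R \ F).indicator fun _ => 1))
      (𝓝[cone A x] (x, 0))
      (𝓝 (pmass d * (closedBall (0 : Ed d) R \ F).indicator (fun _ => 1) x))) :
    Tendsto (major F R c M h) (𝓝[cone A x] (x, 0)) (𝓝 0) := by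
  rw [Set.indicator_of_notMem (fun h => h.2 hx), mul_zero] at h1
  have h2 : Continuous (fun p : Ed d × ℝ => 4 * M / h * p.2 + M * (p.2 * (h - p.2))) := by
    fun_prop
  have h3 := (h2.tendsto (x, 0)).mono_left (inf_le_left : 𝓝[cone A x] (x, (0:ℝ)) ≤ _)
  have := (h1.const_mul (2 * M / c)).add h3
  simp only [mul_zero, sub_zero, zero_mul, add_zero] at this
  exact this

/-- Local Fatou theorem of Calderón type: a `C²` function which is bounded, together with its
Laplacian, in a sawtooth region over a compact set has non-tangential limits almost everywhere
on that set. -/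
theorem ae_tendsto_of_bounded_saw {d : ℕ} {F : Set (Ed d)} {a h M : ℝ} {v : Ed d × ℝ → ℝ}
    (hF : IsCompact F) (hne : F.Nonempty) (ha : 0 < a) (hh : 0 < h) (hM : 0 < M)
    (hv : ContDiffOn ℝ 2 v (saw F a h)) (hvM : ∀ p ∈ saw F a h, |v p| ≤ M)
    (hlM : ∀ p ∈ saw F a h, |lapE v p| ≤ M) :
    ∀ᵐ x, x ∈ F → ∀ A > 0, ∃ L : ℝ, Tendsto v (𝓝[cone A x] (x, 0)) (𝓝 L) := by
  obtain ⟨R, hR⟩ : ∃ R, ∀ t, infDist t F < a * h → ‖t‖ ≤ R := by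
    obtain ⟨B, hB⟩ := hF.isBounded.exists_norm_le
    refine ⟨B + a * h, fun t ht => ?_⟩
    obtain ⟨z, hz, hz'⟩ := (infDist_lt_iff hne).1 ht
    have := norm_le_norm_add_norm_sub' t z
    rw [← dist_eq_norm] at this
    linarith [hB z hz]
  obtain ⟨c, hc, hcl⟩ := exists_kint_pker_lower d ha
  set K := closedBall (0 : Ed d) R
  have : IsFiniteMeasure (volume.restrict K) :=
    ⟨by rw [Measure.restrict_apply_univ]; exact measure_closedBall_lt_top⟩
  -- heights tending to `0` and smaller than `h / 2`
  set s : ℕ → ℝ := fun n => h / 2 * (1 / ((n : ℝ) + 1 + 1)) with hs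
  have hs0 : ∀ n, 0 < s n := fun n => by positivity
  have hs1 : ∀ n, s n < h / 2 := fun n => by
    have : 1 / ((n : ℝ) + 1 + 1) < 1 := by
      rw [div_lt_one (by positivity)]
      have : (0 : ℝ) ≤ n := n.cast_nonneg
      linarith
    have h2 : 0 < h / 2 := by positivity
    simp only [hs]
    nlinarith
  have hslim : Tendsto s atTop (𝓝 0) := by
    have h1 := ((tendsto_add_atTop_iff_nat 1).2
      (tendsto_one_div_add_atTop_nhds_zero_nat (𝕜 := ℝ))).const_mul (h / 2)
    rw [mul_zero] at h1
    refine h1.congr fun n => ?_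
    simp [hs]
  have hs2 : ∀ n, s n < h := fun n => by linarith [hs1 n]
  set φ : ℕ → Ed d → ℝ := fun n => slice F a v (s n) with hφ
  have hφm : ∀ n, Measurable (φ n) := fun n => measurable_slice (hs0 n) (hs2 n) hv.continuousOn
  have hφC : ∀ n t, |φ n t| ≤ (pmass d)⁻¹ * M := fun n t =>
    abs_slice_le (hs0 n) (hs2 n) hM.le hvM t
  have hφ0 : ∀ n t, R < ‖t‖ → φ n t = 0 := fun n t ht => slice_eq_zero ha (hs2 n) hR ht
  obtain ⟨ψ, hψi, hψ⟩ := exists_weak_limit (volume.restrict K) φ hφm hφC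
  set ψ' := K.indicator ψ with hψ'
  have hψ'i : Integrable ψ' := by
    rw [hψ', integrable_indicator_iff measurableSet_closedBall]; exact hψi
  have hψ'0 : ∀ t, R < ‖t‖ → ψ' t = 0 := fun t ht =>
    Set.indicator_of_notMem (fun h => absurd (mem_closedBall_zero_iff.1 h) (not_le.2 ht)) _
  have hkint : ∀ p : Ed d × ℝ, 0 < p.2 →
      Tendsto (fun n => kint (pker d) (φ n) p) (hyperfilter ℕ) (𝓝 (kint (pker d) ψ' p)) := by
    intro p hp
    have hcont : Continuous fun t : Ed d => pker d (p - (t, 0)) :=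
      continuous_shift (contDiffOn_pker d 0).continuousOn hp
    have hg : MemLp (fun t : Ed d => pker d (p - (t, 0))) 2 (volume.restrict K) := by
      obtain ⟨B, hB⟩ := (isCompact_closedBall (0 : Ed d) R).exists_bound_of_continuousOn
        hcont.continuousOn
      exact MemLp.of_bound hcont.aestronglyMeasurable B
        ((ae_restrict_mem measurableSet_closedBall).mono fun t ht => hB t ht)
    have e1 : ∀ n, ∫ t in K, φ n t * pker d (p - (t, 0)) = kint (pker d) (φ n) p := by
      intro n
      rw [kint]
      refine setIntegral_eq_integral_of_forall_compl_eq_zero fun t ht => ?_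
      rw [hφ0 n t (by simpa [K] using ht), zero_mul]
    have e2 : ∫ t in K, ψ t * pker d (p - (t, 0)) = kint (pker d) ψ' p := by
      rw [kint, ← integral_indicator measurableSet_closedBall]
      congr 1
      ext t
      by_cases ht : t ∈ K
      · rw [Set.indicator_of_mem ht, hψ', Set.indicator_of_mem ht, smul_eq_mul]
      · rw [Set.indicator_of_notMem ht, hψ', Set.indicator_of_notMem ht, zero_smul]
    simpa only [e1, e2] using hψ _ hg
  have hcmp : ∀ p ∈ saw F a (h / 2), |v p - kint (pker d) ψ' p| ≤ major F R c M h p := by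
    intro p hp
    have hps : p ∈ saw F a h := ⟨hp.1, by linarith [hp.2.1], hp.2.2⟩
    have t1 : Tendsto (fun n => v (p + (0, s n))) (hyperfilter ℕ) (𝓝 (v p)) := by
      have c1 := (hv.contDiffAt ((isOpen_saw F a h).mem_nhds hps)).continuousAt
      have c2 : Tendsto (fun n => p + ((0 : Ed d), s n)) atTop (𝓝 p) := by
        have c3 : Continuous fun y : ℝ => p + ((0 : Ed d), y) := by fun_prop
        have := (c3.tendsto 0).comp hslim
        have e : p + ((0 : Ed d), (0 : ℝ)) = p := by ext <;> simp
        rwa [e] at this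
      exact (c1.tendsto.comp c2).mono_left Nat.hyperfilter_le_atTop
    have t2 := (t1.sub (hkint p hp.1)).abs
    exact le_of_tendsto' t2 fun n =>
      abs_shift_sub_kint_le hF ha hM hc hR hcl hv hvM hlM (hs0 n) (hs1 n) hp
  filter_upwards [ae_tendsto_kint_pker hψ'i hψ'0,
    ae_tendsto_kint_pker (integrable_indF (R := R) hF) (fun t ht => indF_eq_zero ht)]
    with x h1 h2 hx A hA
  have h3 := tendsto_major (c := c) (M := M) (h := h) hx (h2 A hA)
  -- the Poisson integral of the indicator tends to `0` in the cone but is at least `c` off the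
  -- sawtooth region, so near its vertex the cone lies inside the region
  have h4 : ∀ᶠ p in 𝓝[cone A x] (x, (0 : ℝ)), p ∈ saw F a (h / 2) := by
    have h5 : Tendsto (kint (pker d) ((closedBall 0 R \ F).indicator fun _ => 1))
        (𝓝[cone A x] (x, 0)) (𝓝 0) := by
      have := h2 A hA
      rwa [Set.indicator_of_notMem (fun h => h.2 hx), mul_zero] at this
    have t1 : Tendsto (fun p : Ed d × ℝ => p.2) (𝓝[cone A x] (x, (0 : ℝ))) (𝓝 0) :=
      (continuous_snd.tendsto (x, (0 : ℝ))).mono_left inf_le_left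
    have t2 : Tendsto (fun p : Ed d × ℝ => infDist p.1 F + a * p.2) (𝓝[cone A x] (x, (0 : ℝ)))
        (𝓝 0) := by
      have hcn : Continuous fun p : Ed d × ℝ => infDist p.1 F + a * p.2 :=
        ((continuous_infDist_pt F).comp continuous_fst).add (continuous_const.mul continuous_snd)
      have := hcn.tendsto (x, (0 : ℝ))
      simp only [infDist_zero_of_mem hx, mul_zero, add_zero] at this
      exact this.mono_left inf_le_left
    filter_upwards [self_mem_nhdsWithin, t1.eventually (gt_mem_nhds (half_pos hh)),
      t2.eventually (gt_mem_nhds (mul_pos ha hh)),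
      h5.eventually (gt_mem_nhds hc)] with p hp hp1 hp2 hp3
    refine ⟨hp.1, hp1, ?_⟩
    by_contra hcon
    rw [not_lt] at hcon
    refine absurd hp3 (not_lt.2 (hcl _
      (measurableSet_closedBall.diff hF.isClosed.measurableSet) p hp.1 fun t ht => ?_))
    rw [mem_ball] at ht
    constructor
    · rw [mem_closedBall_zero_iff]
      apply hR
      have := infDist_le_infDist_add_dist (s := F) (x := t) (y := p.1)
      linarith
    · intro htF
      have := infDist_le_dist_of_mem (x := p.1) htF
      rw [dist_comm] at this
      linarith
  refine ⟨pmass d * ψ' x, ?_⟩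
  have h6 : Tendsto (fun p => v p - kint (pker d) ψ' p) (𝓝[cone A x] (x, 0)) (𝓝 0) :=
    squeeze_zero_norm' (h4.mono fun p hp => hcmp p hp) h3
  have h7 := h6.add (h1 A hA)
  simpa using h7

/-! ### The Dunkl weight -/

/-- The square root `∏ |⟨α,x⟩|^κ(α)` of the Dunkl weight, as a function of `(x,y)`; here
`Real.log` is the logarithm of the absolute value. -/
def dweight {d : ℕ} (Rp : Finset (Ed d)) (κ : Ed d → ℝ) (p : Ed d × ℝ) : ℝ :=
  Real.exp (∑ α ∈ Rp, κ α * Real.log ⟪α, p.1⟫)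

section weight
variable {d : ℕ} {R Rp : Finset (Ed d)} {κ : Ed d → ℝ} {u : Ed d × ℝ → ℝ}

lemma dweight_pos (p : Ed d × ℝ) : 0 < dweight Rp κ p := Real.exp_pos _

lemma contDiffAt_dweight {p : Ed d × ℝ} (hp : ∀ α ∈ Rp, ⟪α, p.1⟫ ≠ 0) :
    ContDiffAt ℝ 2 (dweight Rp κ) p := by
  refine ContDiffAt.exp (ContDiffAt.sum fun α hα => contDiffAt_const.mul (ContDiffAt.log ?_ (hp α hα)))
  exact contDiffAt_const.inner ℝ contDiffAt_fst

lemma fderiv_dweight {p : Ed d × ℝ} (hp : ∀ α ∈ Rp, ⟪α, p.1⟫ ≠ 0) (z : Ed d × ℝ) :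
    fderiv ℝ (dweight Rp κ) p z = dweight Rp κ p * ∑ α ∈ Rp, κ α * (⟪α, z.1⟫ / ⟪α, p.1⟫) := by
  have h1 : ∀ α : Ed d, HasFDerivAt (fun q : Ed d × ℝ => ⟪α, q.1⟫)
      ((innerSL ℝ α).comp (ContinuousLinearMap.fst ℝ (Ed d) ℝ)) p := fun α =>
    (innerSL ℝ α).hasFDerivAt.comp p hasFDerivAt_fst
  have h2 := (HasFDerivAt.fun_sum fun α hα => ((h1 α).log (hp α hα)).const_mul (κ α)).exp
  have e : fderiv ℝ (dweight Rp κ) p = _ := h2.fderiv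
  rw [e]
  simp [dweight, div_eq_inv_mul]

lemma continuousAt_lapE {f : Ed d × ℝ → ℝ} {p : Ed d × ℝ} (hf : ContDiffAt ℝ 2 f p) :
    ContinuousAt (lapE f) p := by
  have h1 : ∀ z, ContinuousAt (fun q => pd2 f q z) p := by
    intro z
    have h2 : ContDiffAt ℝ 1 (fun q => fderiv ℝ f q z) p :=
      (hf.fderiv_right (m := 1) (by norm_num)).clm_apply contDiffAt_const
    exact ((h2.fderiv_right (m := 0) (by norm_num)).clm_apply contDiffAt_const).continuousAt
  have h3 : ContinuousAt (fun q => (∑ i : Fin d, pd2 f q (EuclideanSpace.single i 1, 0))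
      + pd2 f q (0, 1)) p :=
    (tendsto_finsetSum _ fun i _ => h1 _).add (h1 _)
  exact h3

lemma sum_fderiv_single (f : Ed d × ℝ → ℝ) (p : Ed d × ℝ) (α : Ed d) :
    ∑ i : Fin d, ⟪α, EuclideanSpace.single i (1 : ℝ)⟫ * fderiv ℝ f p (EuclideanSpace.single i 1, 0)
      = fderiv ℝ f p (α, 0) := by
  have h1 : ((α, 0) : Ed d × ℝ) = ∑ i : Fin d, α i • ((EuclideanSpace.single i 1, 0) : Ed d × ℝ) := by
    refine Prod.ext ?_ ?_
    · rw [Prod.fst_sum]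
      simp only [Prod.smul_fst]
      ext j
      simp [Pi.single_apply]
    · rw [Prod.snd_sum]; simp
  rw [h1, map_sum]
  refine Finset.sum_congr rfl fun i _ => ?_
  rw [map_smul, smul_eq_mul]
  congr 1
  simp [EuclideanSpace.inner_single_right]

/-- For `κ`-harmonic `u` the Laplacian of the product with the square root of the Dunkl weight
contains no derivatives of `u`. -/
lemma lapE_dweight_mul {p : Ed d × ℝ} (hp : ∀ α ∈ Rp, ⟪α, p.1⟫ ≠ 0) (hu : ContDiffAt ℝ 2 u p)
    (h0 : dunklLap Rp κ u p = 0) :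
    lapE (fun q => dweight Rp κ q * u q) p =
      dweight Rp κ p * (2 * ∑ α ∈ Rp, κ α * ((u p - u (reflAt α p.1, p.2)) / ⟪α, p.1⟫ ^ 2))
        + u p * lapE (dweight Rp κ) p := by
  have hW := contDiffAt_dweight (κ := κ) hp
  have e1 : ∑ i : Fin d, fderiv ℝ (dweight Rp κ) p (EuclideanSpace.single i 1, 0)
      * fderiv ℝ u p (EuclideanSpace.single i 1, 0)
      = dweight Rp κ p * ∑ α ∈ Rp, κ α * (fderiv ℝ u p (α, 0) / ⟪α, p.1⟫) := by
    have e : ∀ α ∈ Rp, κ α * (fderiv ℝ u p (α, 0) / ⟪α, p.1⟫) = ∑ i : Fin d,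
        κ α * (⟪α, EuclideanSpace.single i (1 : ℝ)⟫
          * fderiv ℝ u p (EuclideanSpace.single i 1, 0) / ⟪α, p.1⟫) := fun α _ => by
      rw [← sum_fderiv_single u p α, Finset.sum_div, Finset.mul_sum]
    rw [Finset.sum_congr rfl e, Finset.sum_comm, Finset.mul_sum]
    refine Finset.sum_congr rfl fun i _ => ?_
    rw [fderiv_dweight hp, mul_assoc, Finset.sum_mul]
    congr 1
    refine Finset.sum_congr rfl fun α _ => ?_
    ring
  have e2 : fderiv ℝ (dweight Rp κ) p (0, 1) = 0 := by
    rw [fderiv_dweight hp]; simp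
  have e3 : lapE (fun q => dweight Rp κ q * u q) p = dweight Rp κ p * lapE u p
      + 2 * (∑ i : Fin d, fderiv ℝ (dweight Rp κ) p (EuclideanSpace.single i 1, 0)
      * fderiv ℝ u p (EuclideanSpace.single i 1, 0)) + u p * lapE (dweight Rp κ) p := by
    simp only [lapE, pd2_mul hW hu, e2, Finset.sum_add_distrib, ← Finset.mul_sum]
    ring
  have e4 : ∑ α ∈ Rp, κ α *
      (fderiv ℝ u p (α, 0) / ⟪α, p.1⟫ - (u p - u (reflAt α p.1, p.2)) / ⟪α, p.1⟫ ^ 2)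
      = ∑ α ∈ Rp, κ α * (fderiv ℝ u p (α, 0) / ⟪α, p.1⟫)
        - ∑ α ∈ Rp, κ α * ((u p - u (reflAt α p.1, p.2)) / ⟪α, p.1⟫ ^ 2) := by
    rw [← Finset.sum_sub_distrib]
    exact Finset.sum_congr rfl fun α _ => by ring
  rw [dunklLap, e4] at h0
  rw [e3, e1]
  linear_combination dweight Rp κ p * h0

/-- The weight and its Laplacian are bounded on bounded sets away from the mirrors. -/
lemma exists_dweight_bound (Rp : Finset (Ed d)) (κ : Ed d → ℝ) (ρ : ℝ) {δ : ℝ} (hδ : 0 < δ) :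
    ∃ B > 0, ∀ p : Ed d × ℝ, ‖p.1‖ ≤ ρ → 0 < p.2 → p.2 < 1 → (∀ α ∈ Rp, δ ≤ |⟪α, p.1⟫|) →
      dweight Rp κ p ≤ B ∧ |lapE (dweight Rp κ) p| ≤ B := by
  set K : Set (Ed d × ℝ) := (closedBall 0 ρ ×ˢ Set.Icc 0 1) ∩ {p | ∀ α ∈ Rp, δ ≤ |⟪α, p.1⟫|}
  have hcl : IsClosed {p : Ed d × ℝ | ∀ α ∈ Rp, δ ≤ |⟪α, p.1⟫|} := by
    simp only [Set.ofPred_forall]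
    refine isClosed_iInter fun α => isClosed_iInter fun _ => isClosed_le continuous_const ?_
    fun_prop
  have hK : IsCompact K := ((isCompact_closedBall _ _).prod isCompact_Icc).inter_right hcl
  have hreg : ∀ p ∈ K, ∀ α ∈ Rp, ⟪α, p.1⟫ ≠ 0 := fun p hp α hα h => by
    have := hp.2 α hα
    rw [h, abs_zero] at this
    linarith
  obtain ⟨B1, hB1⟩ := hK.exists_bound_of_continuousOn (f := dweight Rp κ)
    fun p hp => (contDiffAt_dweight (hreg p hp)).continuousAt.continuousWithinAt
  obtain ⟨B2, hB2⟩ := hK.exists_bound_of_continuousOn (f := lapE (dweight Rp κ))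
    fun p hp => (continuousAt_lapE (contDiffAt_dweight (hreg p hp))).continuousWithinAt
  refine ⟨max 1 (max B1 B2), by positivity, fun p h1 h2 h3 h4 => ?_⟩
  have hp : p ∈ K := ⟨⟨mem_closedBall_zero_iff.2 h1, h2.le, h3.le⟩, h4⟩
  constructor
  · exact (le_abs_self _).trans ((hB1 p hp).trans ((le_max_left _ _).trans (le_max_right _ _)))
  · exact (hB2 p hp).trans ((le_max_right _ _).trans (le_max_right _ _))

lemma abs_lapE_dweight_mul_le {p : Ed d × ℝ} {N δ B : ℝ} (hN : 0 ≤ N) (hδ : 0 < δ)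
    (hκ : ∀ α ∈ Rp, 0 ≤ κ α)
    (hp : ∀ α ∈ Rp, δ ≤ |⟪α, p.1⟫|) (hu : ContDiffAt ℝ 2 u p)
    (h0 : dunklLap Rp κ u p = 0) (h1 : |u p| ≤ N) (h2 : ∀ α ∈ Rp, |u (reflAt α p.1, p.2)| ≤ N)
    (hB : dweight Rp κ p ≤ B) (hB' : |lapE (dweight Rp κ) p| ≤ B) :
    |lapE (fun q => dweight Rp κ q * u q) p| ≤
      B * (2 * ∑ α ∈ Rp, κ α * (2 * N / δ ^ 2)) + N * B := by
  have hreg : ∀ α ∈ Rp, ⟪α, p.1⟫ ≠ 0 := fun α hα h => by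
    have := hp α hα
    rw [h, abs_zero] at this
    linarith
  have hW := dweight_pos (Rp := Rp) (κ := κ) p
  rw [lapE_dweight_mul hreg hu h0]
  refine (abs_add_le _ _).trans (add_le_add ?_ ?_)
  · rw [abs_mul, abs_mul, abs_of_pos hW, abs_two]
    have : ∀ α ∈ Rp, |κ α * ((u p - u (reflAt α p.1, p.2)) / ⟪α, p.1⟫ ^ 2)|
        ≤ κ α * (2 * N / δ ^ 2) := by
      intro α hα
      rw [abs_mul, abs_of_nonneg (hκ α hα), abs_div, abs_pow]
      refine mul_le_mul_of_nonneg_left ?_ (hκ α hα)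
      refine div_le_div₀ (by positivity) ?_ (by positivity) ?_
      · refine (abs_sub _ _).trans ?_
        linarith [h2 α hα]
      · have := hp α hα
        gcongr
    have h5 := (Finset.abs_sum_le_sum_abs _ _).trans (Finset.sum_le_sum this)
    have h6 := (abs_nonneg _).trans h5
    have hB0 : 0 ≤ B := hW.le.trans hB
    gcongr
  · rw [abs_mul]
    gcongr

/-- The non-tangential limits exist almost everywhere on a set on which all quantitative
parameters are uniformly controlled. -/
lemma ae_hasNTLimit_of_uniform (hRS : IsRootSystem R Rp κ) (hu : KHarmonicOn R Rp κ u (upperHS d))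
    {S : Set (Ed d)} {N : ℝ} (hN : 1 ≤ N) (hS1 : ∀ x ∈ S, ‖x‖ ≤ N)
    (hS2 : ∀ x ∈ S, ∀ α ∈ R, 3 / N ≤ |⟪α, x⟫|)
    (hS3 : ∀ x ∈ S, ∀ p ∈ coneT (1 / N) (1 / N) x, |u p| ≤ N)
    (hS4 : ∀ x ∈ S, ∀ α ∈ Rp, ∀ p ∈ coneT (1 / N) (1 / N) x, |u (reflAt α p.1, p.2)| ≤ N) :
    ∀ᵐ x, x ∈ S → HasNTLimit u x := by
  rcases S.eq_empty_or_nonempty with rfl | hne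
  · simp
  have hN0 : 0 < N := by linarith
  have hN1 : 1 / N ≤ 1 := by rw [div_le_one hN0]; exact hN
  have hN2 : 0 < 1 / N := by positivity
  have hF : IsCompact (closure S) := by
    have : Bornology.IsBounded S := isBounded_iff_forall_norm_le.2 ⟨N, hS1⟩
    exact this.isCompact_closure
  have hα : ∀ α ∈ R, ‖α‖ ≤ 2 := fun α hα => by
    have h1 := hRS.norm_two α hα
    rw [real_inner_self_eq_norm_sq] at h1
    nlinarith [norm_nonneg α]
  have hsaw : ∀ p ∈ saw (closure S) (1 / N) (1 / N), ‖p.1‖ ≤ N + 1 ∧ 0 < p.2 ∧ p.2 < 1 ∧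
      (∀ α ∈ R, 1 / N ≤ |⟪α, p.1⟫|) ∧ |u p| ≤ N ∧ ∀ α ∈ Rp, |u (reflAt α p.1, p.2)| ≤ N := by
    intro p hp
    have hp1 : infDist p.1 S < 1 / N * p.2 := by
      have := hp.2.2
      rwa [infDist_closure] at this
    obtain ⟨x, hx, hxp⟩ := (infDist_lt_iff hne).1 hp1
    have hc : p ∈ coneT (1 / N) (1 / N) x := ⟨hp.1, hp.2.1, hxp⟩
    have hp2 := hp.2.1
    have hp0 := hp.1
    have hd : dist p.1 x ≤ 1 / N := by nlinarith
    refine ⟨?_, hp0, by linarith, fun α hαR => ?_, hS3 x hx p hc, fun α hαR => hS4 x hx α hαR p hc⟩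
    · have := norm_le_norm_add_norm_sub' p.1 x
      rw [← dist_eq_norm] at this
      linarith [hS1 x hx]
    · have h1 := hS2 x hx α hαR
      have h2 : |⟪α, p.1 - x⟫| ≤ 2 * (1 / N) := by
        refine (abs_real_inner_le_norm _ _).trans ?_
        rw [← dist_eq_norm]
        exact mul_le_mul (hα α hαR) hd dist_nonneg zero_le_two
      rw [inner_sub_right] at h2
      have h3 : |⟪α, x⟫| ≤ |⟪α, p.1⟫| + |⟪α, p.1⟫ - ⟪α, x⟫| := by
        have := abs_sub_abs_le_abs_sub ⟪α, x⟫ ⟪α, p.1⟫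
        rw [abs_sub_comm] at this
        linarith
      have h4 : 3 / N = 3 * (1 / N) := by ring
      linarith
  obtain ⟨B, hB0, hB⟩ := exists_dweight_bound Rp κ (N + 1) hN2
  have hκ : ∀ α ∈ Rp, 0 ≤ κ α := fun α h => hRS.kappa_nonneg α (hRS.pos_sub h)
  have huC : ∀ p : Ed d × ℝ, 0 < p.2 → ContDiffAt ℝ 2 u p := fun p hp =>
    hu.1.contDiffAt ((isOpen_upperHS d).mem_nhds hp)
  have hreg : ∀ x : Ed d, (∀ α ∈ R, 1 / N ≤ |⟪α, x⟫|) → ∀ α ∈ R, ⟪α, x⟫ ≠ 0 :=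
    fun x hx α hα h => by
      have := hx α hα
      rw [h, abs_zero] at this
      linarith
  set C := B * (2 * ∑ α ∈ Rp, κ α * (2 * N / (1 / N) ^ 2)) + N * B with hC
  have hNB : N * B ≤ C := by
    have : 0 ≤ ∑ α ∈ Rp, κ α * (2 * N / (1 / N) ^ 2) :=
      Finset.sum_nonneg fun α h => mul_nonneg (hκ α h) (by positivity)
    have : 0 ≤ B * (2 * ∑ α ∈ Rp, κ α * (2 * N / (1 / N) ^ 2)) := by positivity
    linarith
  have key := ae_tendsto_of_bounded_saw (v := fun q => dweight Rp κ q * u q) (M := C) hF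
    hne.closure hN2 hN2 ((by positivity : 0 < N * B).trans_le hNB) ?_ ?_ ?_
  · filter_upwards [key] with x hx hxS A hA
    obtain ⟨L, hL⟩ := hx (subset_closure hxS) A hA
    have hxr : ∀ α ∈ Rp, ⟪α, ((x, 0) : Ed d × ℝ).1⟫ ≠ 0 := fun α h =>
      hreg x (fun α h => le_trans (by gcongr; norm_num) (hS2 x hxS α h)) α (hRS.pos_sub h)
    have hW := (contDiffAt_dweight (κ := κ) hxr).continuousAt.tendsto.mono_left
      (inf_le_left : 𝓝[cone A x] (x, (0:ℝ)) ≤ _)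
    refine ⟨_, (hL.div hW (dweight_pos _).ne').congr fun p => ?_⟩
    have := (dweight_pos (Rp := Rp) (κ := κ) p).ne'
    simp only [Pi.div_apply]
    field_simp
  · intro p hp
    obtain ⟨h1, h2, h3, h4, h5, h6⟩ := hsaw p hp
    exact ((contDiffAt_dweight fun α h => hreg _ h4 α (hRS.pos_sub h)).mul
      (huC p h2)).contDiffWithinAt
  · intro p hp
    obtain ⟨h1, h2, h3, h4, h5, h6⟩ := hsaw p hp
    have := (hB p h1 h2 h3 fun α h => h4 α (hRS.pos_sub h)).1
    have hW := dweight_pos (Rp := Rp) (κ := κ) p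
    rw [abs_mul, abs_of_pos hW]
    refine le_trans ?_ hNB
    rw [mul_comm]
    gcongr
  · intro p hp
    obtain ⟨h1, h2, h3, h4, h5, h6⟩ := hsaw p hp
    have h7 := hB p h1 h2 h3 fun α h => h4 α (hRS.pos_sub h)
    exact abs_lapE_dweight_mul_le hN0.le hN2 hκ (fun α h => h4 α (hRS.pos_sub h)) (huC p h2)
      (hu.2 p h2 (hreg _ h4)) h5 h6 h7.1 h7.2

end weight

/-! ### Covering by sets with uniform bounds -/

section cover
variable {d : ℕ} {R Rp : Finset (Ed d)} {κ : Ed d → ℝ} {u : Ed d × ℝ → ℝ}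

lemma dist_reflAt {α : Ed d} (hα : ⟪α, α⟫ = (2 : ℝ)) (x z : Ed d) :
    dist (reflAt α x) (reflAt α z) = dist x z := by
  have h1 : ∀ w : Ed d, ‖reflAt α w‖ = ‖w‖ := fun w => by
    have h2 : ‖reflAt α w‖ ^ 2 = ‖w‖ ^ 2 := by
      rw [← real_inner_self_eq_norm_sq, ← real_inner_self_eq_norm_sq, reflAt]
      simp only [inner_sub_left, inner_sub_right, inner_smul_left, inner_smul_right, hα,
        real_inner_comm]
      simp
      ring
    exact (sq_eq_sq₀ (norm_nonneg _) (norm_nonneg _)).1 h2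
  have h3 : reflAt α x - reflAt α z = reflAt α (x - z) := by
    simp only [reflAt, inner_sub_right, sub_smul]
    abel
  rw [dist_eq_norm, h3, h1, dist_eq_norm]

lemma ae_isRegular (hRS : IsRootSystem R Rp κ) : ∀ᵐ x : Ed d, isRegular R x := by
  unfold isRegular
  refine (ae_ball_iff R.countable_toSet).2 ?_
  intro α hα
  have h1 : LinearMap.ker (innerₛₗ ℝ α) ≠ ⊤ := by
    intro h
    have : α ∈ LinearMap.ker (innerₛₗ ℝ α) := by rw [h]; trivial
    have h2 : ⟪α, α⟫ = (0 : ℝ) := by simpa using this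
    have := hRS.norm_two α hα
    linarith
  have := Measure.addHaar_submodule (volume : Measure (Ed d)) _ h1
  rw [ae_iff]
  convert this using 2
  ext x
  simp

/-- Non-tangential boundedness holds with all parameters governed by one large integer. -/
lemma NTBounded.eventually {x : Ed d} (h : NTBounded u x) :
    ∀ᶠ n : ℕ in atTop, ∀ p ∈ coneT (1 / ((n : ℝ) + 1)) (1 / ((n : ℝ) + 1)) x,
      |u p| ≤ (n : ℝ) + 1 := by
  obtain ⟨a, ha, b, hb, M, hM⟩ := h
  have h1 := tendsto_one_div_add_atTop_nhds_zero_nat (𝕜 := ℝ)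
  filter_upwards [h1.eventually (gt_mem_nhds ha), h1.eventually (gt_mem_nhds hb),
    tendsto_natCast_atTop_atTop.eventually (eventually_ge_atTop M)] with n h2 h3 h4 p hp
  have := hM p ⟨hp.1, hp.2.1.trans h3, hp.2.2.trans_le (mul_le_mul_of_nonneg_right h2.le hp.1.le)⟩
  linarith

end cover

/-- **Theorem 4.1 (local Privalov–Calderón).** If `u` is `κ`-harmonic in `ℝ^{d+1}₊` and
non-tangentially bounded at `(x,0)` for every `x` in a `G`-invariant measurable set `E`,
then there is a full-measure subset `E₀` of `E` such that for every `a > 0` and every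
`x ∈ E₀`, `u(t,y)` has a finite limit as `(t,y) ∈ Γ_a(x)` tends to `(x,0)`. -/
theorem dunkl_ntbounded_imp_ntlimit_on_full_subset
    {d : ℕ} (hd : 1 ≤ d) (R Rp : Finset (Ed d)) (κ : Ed d → ℝ)
    (hRS : IsRootSystem R Rp κ)
    (E : Set (Ed d)) (hEm : MeasurableSet E) (hEinv : GInvSet R E)
    (u : Ed d × ℝ → ℝ) (hu : KHarmonicOn R Rp κ u (upperHS d))
    (hbdd : ∀ x ∈ E, NTBounded u x) :
    ∃ E₀ ⊆ E, volume (E \ E₀) = 0 ∧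
      ∀ x ∈ E₀, ∀ a > (0 : ℝ), ∃ L : ℝ,
        Tendsto u (𝓝[cone a x] (x, (0 : ℝ))) (𝓝 L) := by
  -- `3 / (n + 1)` leaves room for the cones: on them `|⟨α,·⟩| ≥ 1 / (n + 1)`, as `‖α‖ ≤ 2`
  let S : ℕ → Set (Ed d) := fun n => {x | ‖x‖ ≤ (n : ℝ) + 1 ∧
    (∀ α ∈ R, 3 / ((n : ℝ) + 1) ≤ |⟪α, x⟫|) ∧
    (∀ p ∈ coneT (1 / ((n : ℝ) + 1)) (1 / ((n : ℝ) + 1)) x, |u p| ≤ (n : ℝ) + 1) ∧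
    ∀ α ∈ Rp, ∀ p ∈ coneT (1 / ((n : ℝ) + 1)) (1 / ((n : ℝ) + 1)) x,
      |u (reflAt α p.1, p.2)| ≤ (n : ℝ) + 1}
  have hS : ∀ n, ∀ᵐ x, x ∈ S n → HasNTLimit u x := fun n =>
    ae_hasNTLimit_of_uniform hRS hu (by have : (0 : ℝ) ≤ n := n.cast_nonneg
                                        linarith)
      (fun x hx => hx.1) (fun x hx => hx.2.1) (fun x hx => hx.2.2.1) (fun x hx => hx.2.2.2)
  have hcov : ∀ x ∈ E, isRegular R x → ∃ n, x ∈ S n := by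
    intro x hxE hx
    have e1 : ∀ᶠ n : ℕ in atTop, ‖x‖ ≤ (n : ℝ) + 1 := by
      filter_upwards [tendsto_natCast_atTop_atTop.eventually (eventually_ge_atTop ‖x‖)] with n hn
      linarith
    have e2 : ∀ᶠ n : ℕ in atTop, ∀ α ∈ R, 3 / ((n : ℝ) + 1) ≤ |⟪α, x⟫| := by
      rw [Filter.eventually_all_finset]
      intro α hα
      have h1 := (tendsto_one_div_add_atTop_nhds_zero_nat (𝕜 := ℝ)).const_mul 3
      rw [mul_zero] at h1
      filter_upwards [h1.eventually (gt_mem_nhds (abs_pos.2 (hx α hα)))] with n hn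
      rw [mul_one_div] at hn
      exact hn.le
    have e4 : ∀ᶠ n : ℕ in atTop, ∀ α ∈ Rp,
        ∀ p ∈ coneT (1 / ((n : ℝ) + 1)) (1 / ((n : ℝ) + 1)) x,
        |u (reflAt α p.1, p.2)| ≤ (n : ℝ) + 1 := by
      rw [Filter.eventually_all_finset]
      intro α hα
      have hαR := hRS.pos_sub hα
      -- invariance of `E` makes `u` non-tangentially bounded at the reflected point as well
      have hmem : reflAt α x ∈ E := by
        rw [← hEinv (reflAt α) (Submonoid.subset_closure ⟨α, hαR, rfl⟩)]
        exact ⟨x, hxE, rfl⟩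
      filter_upwards [(hbdd _ hmem).eventually] with n hn p hp
      refine hn _ ⟨hp.1, hp.2.1, ?_⟩
      simp only [dist_reflAt (hRS.norm_two α hαR)]
      exact hp.2.2
    obtain ⟨n, h1, h2, h3, h4⟩ := (e1.and (e2.and ((hbdd x hxE).eventually.and e4))).exists
    exact ⟨n, h1, h2, h3, h4⟩
  refine ⟨{x ∈ E | HasNTLimit u x}, fun x hx => hx.1, ?_, fun x hx => hx.2⟩
  have hall : ∀ᵐ x, x ∈ E → HasNTLimit u x := by
    filter_upwards [ae_isRegular hRS, ae_all_iff.2 hS] with x hx hx' hxE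
    obtain ⟨n, hn⟩ := hcov x hxE hx
    exact hx' n hn
  rw [ae_iff] at hall
  refine measure_mono_null (fun x hx => ?_) hall
  exact fun h => hx.2 ⟨hx.1, h hx.1⟩

end
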